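/- arXiv:1002.2352 — 2 statements merged into one kernel-verified Lean document; each statement's English description precedes it below -/
import Mathlib

section
/- Let A be a 4-dimensional absolute-valued real algebra. Then A satisfies the identity (x², x², x) = 0 (i.e. (x² x²) x = x² (x² x) for all x ∈ A, where x² = xx) if and only if A is isomorphic to ℍ, to *ℍ, or to *ℍ(i,1). -/
/-!
The norm of an absolute-valued algebra of dimension 4 is Euclidean: left multiplication by `w` is
`‖w‖` times an isometry, so for a linear form `φ ≠ 0` the integral of `φ (w z) ^ 2` over the unit
ball is a positive multiple of `‖w‖ ^ 2`, while it is visibly a quadratic form in `w`. Normalising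
both factors by multiplication with a unit vector turns the product into a unital composition
algebra, whose left multiplications satisfy the Clifford relations; hence the algebra is isotopic
to `ℍ` through linear isometries. As every isometry of `ℍ` is `x ↦ a x b` or `x ↦ a x̄ b`, this
leaves four families of products, such as `a x b y c` or `a x̄ b y c`. On unit quaternions the
identity `(x², x², x) = 0` becomes a family of group relations between the parameters. Evaluated at
`1`, at square roots of `-1` and at elements conjugating a parameter to its inverse, they exclude
the two families with `ȳ` and determine the parameters in the other two up to isomorphism.
-/

/-- The first imaginary unit `i` of the quaternions. -/
def quatI : Quaternion ℝ := ⟨0, 1, 0, 0⟩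

/-- The second imaginary unit `j` of the quaternions. -/
def quatJ : Quaternion ℝ := ⟨0, 0, 1, 0⟩

section Quaternion

open Quaternion

@[simp] theorem re_quatI : quatI.re = 0 := rfl

@[simp] theorem imI_quatI : quatI.imI = 1 := rfl

@[simp] theorem imJ_quatI : quatI.imJ = 0 := rfl

@[simp] theorem imK_quatI : quatI.imK = 0 := rfl

@[simp] theorem re_quatJ : quatJ.re = 0 := rfl

@[simp] theorem imI_quatJ : quatJ.imI = 0 := rfl

@[simp] theorem imJ_quatJ : quatJ.imJ = 1 := rfl

@[simp] theorem imK_quatJ : quatJ.imK = 0 := rfl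

theorem quatI_mul_self : quatI * quatI = -1 := by
  ext <;> simp

theorem quatJ_mul_self : quatJ * quatJ = -1 := by
  ext <;> simp

theorem quatJ_mul_quatI : quatJ * quatI = -(quatI * quatJ) := by
  ext <;> simp

theorem star_quatI : star quatI = -quatI := by
  ext <;> simp

theorem star_quatJ : star quatJ = -quatJ := by
  ext <;> simp

theorem smul_add_smul_quatI_add_smul_quatJ (q : ℍ[ℝ]) :
    q.re • 1 + q.imI • quatI + q.imJ • quatJ + q.imK • (quatI * quatJ) = q := by
  ext <;> simp

theorem re_mul_comm {R : Type*} [CommRing R] (p q : ℍ[R]) : (p * q).re = (q * p).re := by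
  simp only [re_mul]
  ring

theorem linearMap_quaternion_ext {M : Type*} [AddCommGroup M] [Module ℝ M] {f g : ℍ[ℝ] →ₗ[ℝ] M}
    (h1 : f 1 = g 1) (hI : f quatI = g quatI) (hJ : f quatJ = g quatJ)
    (hK : f (quatI * quatJ) = g (quatI * quatJ)) : f = g := by
  ext q
  rw [← smul_add_smul_quatI_add_smul_quatJ q]
  simp only [map_add, map_smul, h1, hI, hJ, hK]

theorem exists_algHom_quaternion {A : Type*} [Ring A] [Algebra ℝ A] {a b : A} (ha : a * a = -1)
    (hb : b * b = -1) (hba : b * a = -(a * b)) :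
    ∃ ρ : ℍ[ℝ] →ₐ[ℝ] A, ρ quatI = a ∧ ρ quatJ = b := by
  let B : QuaternionAlgebra.Basis A (-1 : ℝ) 0 (-1) :=
    { i := a, j := b, k := a * b
      i_mul_i := by simp [ha]
      j_mul_j := by simp [hb]
      i_mul_j := rfl
      j_mul_i := by simp [hba] }
  let ρ : ℍ[ℝ] →ₐ[ℝ] A := B.liftHom
  have hρ : ∀ q : ℍ[ℝ], ρ q =
    algebraMap ℝ A q.re + q.imI • a + q.imJ • b + q.imK • (a * b) := fun _ => rfl
  refine ⟨ρ, ?_, ?_⟩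
  · simp [hρ]
  · simp [hρ]

end Quaternion

section EuclideanNorm

open MeasureTheory Metric

variable {E F : Type*} [NormedAddCommGroup E] [NormedSpace ℝ E]
  [NormedAddCommGroup F] [NormedSpace ℝ F]

section

variable [MeasurableSpace F] [BorelSpace F]

theorem setIntegral_ball_comp_linearIsometryEquiv (e : F ≃ₗᵢ[ℝ] F) (f : F → ℝ) (d r : ℝ) :
    ∫ z in ball 0 r, f (e z) ∂μH[d] = ∫ z in ball 0 r, f z ∂μH[d] := by
  have h := (e.toIsometryEquiv.measurePreserving_hausdorffMeasure d).setIntegral_preimage_emb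
    e.toHomeomorph.measurableEmbedding f (ball 0 r)
  simpa using h

variable [FiniteDimensional ℝ F]

theorem integrableOn_ball_of_continuous {f : F → ℝ} (hf : Continuous f) (μ : Measure F)
    [IsFiniteMeasureOnCompacts μ] (r : ℝ) : IntegrableOn f (ball 0 r) μ :=
  (hf.continuousOn.integrableOn_compact (isCompact_closedBall 0 r)).mono_set ball_subset_closedBall

theorem setIntegral_ball_sq_pos {φ : F →L[ℝ] ℝ} (hφ : φ ≠ 0) (μ : Measure F)
    [IsFiniteMeasureOnCompacts μ] [μ.IsOpenPosMeasure] {r : ℝ} (hr : 0 < r) :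
    0 < ∫ z in ball 0 r, φ z ^ 2 ∂μ := by
  obtain ⟨v, hv⟩ := DFunLike.ne_iff.1 hφ
  have hcont : Continuous fun z => φ z ^ 2 := by fun_prop
  refine (setIntegral_pos_iff_support_of_nonneg_ae (.of_forall fun z => sq_nonneg (φ z))
    (integrableOn_ball_of_continuous hcont μ r)).2 ?_
  refine (hcont.isOpen_support.inter isOpen_ball).measure_pos μ ?_
  have hv0 : ‖v‖ ≠ 0 := norm_ne_zero_iff.2 (by rintro rfl; simp at hv)
  refine ⟨(r / (2 * ‖v‖)) • v, ?_, ?_⟩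
  · simp_all [hr.ne']
  · rw [mem_ball_zero_iff, norm_smul, Real.norm_of_nonneg (by positivity)]
    field_simp
    linarith

theorem setIntegral_ball_sq_apply (mul : E →ₗ[ℝ] F →ₗ[ℝ] F)
    (hmul : ∀ x y, ‖mul x y‖ = ‖x‖ * ‖y‖) (φ : F →L[ℝ] ℝ) (w : E) :
    ∫ z in ball 0 1, φ (mul w z) ^ 2 ∂μH[Module.finrank ℝ F] =
      ‖w‖ * ‖w‖ * ∫ z in ball 0 1, φ z ^ 2 ∂μH[Module.finrank ℝ F] := by
  rcases eq_or_ne w 0 with rfl | hw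
  · simp
  have hw : ‖w‖ ≠ 0 := norm_ne_zero_iff.2 hw
  let e : F ≃ₗᵢ[ℝ] F := LinearIsometry.toLinearIsometryEquiv
    ⟨mul (‖w‖⁻¹ • w), fun z => by
      rw [hmul, norm_smul, norm_inv, norm_norm, inv_mul_cancel₀ hw, one_mul]⟩ rfl
  have he : ∀ z, mul w z = ‖w‖ • e z := fun z => by
    simp [e, smul_smul, mul_inv_cancel₀ hw]
  simp only [he, map_smul, smul_eq_mul, mul_pow, integral_const_mul, ← sq]
  rw [setIntegral_ball_comp_linearIsometryEquiv e (fun z => φ z ^ 2)]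

end

theorem parallelogram_law_of_norm_mul [FiniteDimensional ℝ F] [Nontrivial F]
    (mul : E →ₗ[ℝ] F →ₗ[ℝ] F) (hmul : ∀ x y, ‖mul x y‖ = ‖x‖ * ‖y‖) (x y : E) :
    ‖x + y‖ * ‖x + y‖ + ‖x - y‖ * ‖x - y‖ = 2 * (‖x‖ * ‖x‖ + ‖y‖ * ‖y‖) := by
  borelize F
  obtain ⟨φ, hφ⟩ := exists_ne (0 : F →L[ℝ] ℝ)
  -- In top dimension the Hausdorff measure is a Haar measure, and it is invariant under isometries.
  let μ : Measure F := μH[Module.finrank ℝ F]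
  have hint : ∀ w, IntegrableOn (fun z => φ (mul w z) ^ 2) (ball 0 1) μ := fun w =>
    integrableOn_ball_of_continuous
      ((φ.continuous.comp (LinearMap.continuous_of_finiteDimensional (mul w))).pow 2) μ 1
  have hpar :
      ∫ z in ball 0 1, φ (mul (x + y) z) ^ 2 ∂μ + ∫ z in ball 0 1, φ (mul (x - y) z) ^ 2 ∂μ =
        2 * (∫ z in ball 0 1, φ (mul x z) ^ 2 ∂μ + ∫ z in ball 0 1, φ (mul y z) ^ 2 ∂μ) := by
    rw [← integral_add (hint _) (hint _), ← integral_add (hint _) (hint _), ← integral_const_mul]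
    congr 1 with z
    simp only [map_add, map_sub, LinearMap.add_apply, LinearMap.sub_apply]
    ring
  simp only [μ, setIntegral_ball_sq_apply mul hmul] at hpar
  have hpos := setIntegral_ball_sq_pos hφ μ one_pos
  exact mul_right_cancel₀ hpos.ne' (by linear_combination hpar)

end EuclideanNorm

section Composition

open Quaternion
open scoped RealInnerProductSpace

variable {E V W : Type*} [NormedAddCommGroup E] [InnerProductSpace ℝ E]
  [NormedAddCommGroup V] [InnerProductSpace ℝ V] [NormedAddCommGroup W] [InnerProductSpace ℝ W]

section

variable {N : E →ₗ[ℝ] V →ₗ[ℝ] W} (hN : ∀ x y, ‖N x y‖ = ‖x‖ * ‖y‖)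

include hN

theorem inner_apply_self_of_norm_mul (x : E) (y z : V) :
    ⟪N x y, N x z⟫ = ‖x‖ * ‖x‖ * ⟪y, z⟫ := by
  simp only [real_inner_eq_norm_add_mul_self_sub_norm_mul_self_sub_norm_mul_self_div_two,
    ← map_add, hN]
  ring

theorem inner_apply_add_inner_apply_of_norm_mul (x w : E) (y z : V) :
    ⟪N x y, N w z⟫ + ⟪N w y, N x z⟫ = 2 * ⟪x, w⟫ * ⟪y, z⟫ := by
  have h := inner_apply_self_of_norm_mul hN (x + w) y z
  simp only [map_add, LinearMap.add_apply, inner_add_left, inner_add_right,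
    inner_apply_self_of_norm_mul hN, norm_add_mul_self_real] at h
  linear_combination h

end

section

variable {N : E →ₗ[ℝ] V →ₗ[ℝ] V} (hN : ∀ x y, ‖N x y‖ = ‖x‖ * ‖y‖) {e : E} (he : N e = 1)

include hN he

theorem inner_apply_left_of_inner_eq_zero {x : E} (hx : ⟪x, e⟫ = 0) (y z : V) :
    ⟪N x y, z⟫ = -⟪y, N x z⟫ := by
  have h := inner_apply_add_inner_apply_of_norm_mul hN x e y z
  simp only [he, hx, Module.End.one_apply] at h
  linear_combination h

theorem apply_mul_self_of_inner_eq_zero {x : E} (hx : ⟪x, e⟫ = 0) :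
    N x * N x = -(‖x‖ * ‖x‖) • 1 := by
  ext y
  refine ext_inner_right ℝ fun z => ?_
  rw [Module.End.mul_apply, inner_apply_left_of_inner_eq_zero hN he hx,
    inner_apply_self_of_norm_mul hN, LinearMap.smul_apply, Module.End.one_apply,
    real_inner_smul_left, neg_mul]

theorem apply_mul_apply_of_inner_eq_zero {x w : E} (hx : ⟪x, e⟫ = 0) (hw : ⟪w, e⟫ = 0)
    (hxw : ⟪x, w⟫ = 0) : N w * N x = -(N x * N w) := by
  ext y
  refine ext_inner_right ℝ fun z => ?_
  have h := inner_apply_add_inner_apply_of_norm_mul hN x w y z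
  rw [hxw] at h
  simp only [LinearMap.neg_apply, Module.End.mul_apply, inner_neg_left,
    inner_apply_left_of_inner_eq_zero hN he hw (N x y),
    inner_apply_left_of_inner_eq_zero hN he hx (N w y)]
  linear_combination -h

end

theorem norm_algHom_quaternion_apply (ρ : ℍ[ℝ] →ₐ[ℝ] Module.End ℝ V)
    (hI : ∀ x y, ⟪ρ quatI x, y⟫ = -⟪x, ρ quatI y⟫) (hJ : ∀ x y, ⟪ρ quatJ x, y⟫ = -⟪x, ρ quatJ y⟫)
    (q : ℍ[ℝ]) (x : V) : ‖ρ q x‖ = ‖q‖ * ‖x‖ := by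
  have hadj : ∀ x y, ⟪ρ q x, y⟫ = ⟪x, ρ (star q) y⟫ := fun x y => by
    rw [← smul_add_smul_quatI_add_smul_quatJ q]
    simp [star_quatI, star_quatJ, inner_add_left, inner_add_right, real_inner_smul_left,
      real_inner_smul_right, hI, hJ]
  rw [← mul_self_inj (norm_nonneg _) (by positivity), ← real_inner_self_eq_norm_mul_norm,
    hadj, ← Module.End.mul_apply, ← map_mul, star_mul_self, ← algebraMap_def, AlgHom.commutes,
    Module.algebraMap_end_apply, real_inner_smul_right, real_inner_self_eq_norm_mul_norm,
    normSq_eq_norm_mul_self]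
  ring

theorem exists_algHom_quaternion_of_norm_mul {N : E →ₗ[ℝ] V →ₗ[ℝ] V}
    (hN : ∀ x y, ‖N x y‖ = ‖x‖ * ‖y‖) {e i j : E} (he : N e = 1) (hi : ‖i‖ = 1) (hj : ‖j‖ = 1)
    (hie : ⟪i, e⟫ = 0) (hje : ⟪j, e⟫ = 0) (hij : ⟪i, j⟫ = 0) :
    ∃ ρ : ℍ[ℝ] →ₐ[ℝ] Module.End ℝ V, ρ quatI = N i ∧ ρ quatJ = N j ∧
      ∀ q x, ‖ρ q x‖ = ‖q‖ * ‖x‖ := by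
  obtain ⟨ρ, hI, hJ⟩ := exists_algHom_quaternion
    (by simpa [hi] using apply_mul_self_of_inner_eq_zero hN he hie)
    (by simpa [hj] using apply_mul_self_of_inner_eq_zero hN he hje)
    (apply_mul_apply_of_inner_eq_zero hN he hie hje hij)
  refine ⟨ρ, hI, hJ, norm_algHom_quaternion_apply ρ ?_ ?_⟩
  · simpa only [hI] using inner_apply_left_of_inner_eq_zero hN he hie
  · simpa only [hJ] using inner_apply_left_of_inner_eq_zero hN he hje

section

variable {ρ : ℍ[ℝ] →ₐ[ℝ] Module.End ℝ V} {ψ : ℍ[ℝ] ≃ₗᵢ[ℝ] V} (hρ : ∀ q, ρ q (ψ 1) = ψ q)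

include hρ

theorem eq_zero_of_anticommute_algHom_quaternion {S : Module.End ℝ V} (h1 : S (ψ 1) = 0)
    (hI : S * ρ quatI = -(ρ quatI * S)) (hJ : S * ρ quatJ = -(ρ quatJ * S)) : S = 0 := by
  have hI' : ∀ x, S (ρ quatI x) = -ρ quatI (S x) := LinearMap.congr_fun hI
  have hJ' : ∀ x, S (ρ quatJ x) = -ρ quatJ (S x) := LinearMap.congr_fun hJ
  have hSψ : S ∘ₗ ψ.toLinearMap = 0 :=
    linearMap_quaternion_ext (by simp [h1]) (by simp [← hρ quatI, hI', h1])
      (by simp [← hρ quatJ, hJ', h1]) (by simp [← hρ (quatI * quatJ), hI', hJ', h1])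
  ext x
  simpa using LinearMap.congr_fun hSψ (ψ.symm x)

theorem apply_eq_algHom_quaternion {N : V →ₗ[ℝ] V →ₗ[ℝ] V} (hN : ∀ x y, ‖N x y‖ = ‖x‖ * ‖y‖)
    (h1 : N (ψ 1) = 1) (hr : ∀ x, N x (ψ 1) = x) (hI : N (ψ quatI) = ρ quatI)
    (hJ : N (ψ quatJ) = ρ quatJ) (q : ℍ[ℝ]) : N (ψ q) = ρ q := by
  have hanti : ∀ p : ℍ[ℝ], ⟪p, 1⟫ = 0 → ⟪p, quatI * quatJ⟫ = 0 →
      N (ψ (quatI * quatJ)) * N (ψ p) = -(N (ψ p) * N (ψ (quatI * quatJ))) := fun p hp1 hpK =>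
    apply_mul_apply_of_inner_eq_zero hN h1 (by rwa [ψ.inner_map_map])
      (by rw [ψ.inner_map_map]; simp [Quaternion.inner_def]) (by rwa [ψ.inner_map_map])
  have hK : N (ψ (quatI * quatJ)) = ρ (quatI * quatJ) := by
    refine sub_eq_zero.1 (eq_zero_of_anticommute_algHom_quaternion hρ ?_ ?_ ?_)
    · rw [LinearMap.sub_apply, hr, hρ, sub_self]
    · have hρI : ρ (quatI * quatJ) * ρ quatI = -(ρ quatI * ρ (quatI * quatJ)) := by
        rw [← map_mul, ← map_mul, ← map_neg, mul_assoc, quatJ_mul_quatI, mul_neg]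
      rw [sub_mul, mul_sub, ← hI, hanti _ (by simp [Quaternion.inner_def])
        (by simp [Quaternion.inner_def]), hI, hρI]
      abel
    · have hρJ : ρ (quatI * quatJ) * ρ quatJ = -(ρ quatJ * ρ (quatI * quatJ)) := by
        rw [← map_mul, ← map_mul, ← map_neg, ← mul_assoc, quatJ_mul_quatI, neg_mul, neg_neg]
      rw [sub_mul, mul_sub, ← hJ, hanti _ (by simp [Quaternion.inner_def])
        (by simp [Quaternion.inner_def]), hJ, hρJ]
      abel
  exact LinearMap.congr_fun (linearMap_quaternion_ext (f := N ∘ₗ ψ.toLinearMap)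
    (g := ρ.toLinearMap) (by simpa using h1) (by simpa using hI) (by simpa using hJ)
    (by simpa using hK)) q

end

theorem exists_linearIsometryEquiv_quaternion (hdim : Module.finrank ℝ V = 4)
    {N : V →ₗ[ℝ] V →ₗ[ℝ] V} (hN : ∀ x y, ‖N x y‖ = ‖x‖ * ‖y‖) {e : V} (he : ‖e‖ = 1)
    (hl : N e = 1) (hr : ∀ x, N x e = x) :
    ∃ φ : V ≃ₗᵢ[ℝ] ℍ[ℝ], ∀ x y, φ (N x y) = φ x * φ y := by
  have : FiniteDimensional ℝ V := .of_finrank_pos (by omega)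
  obtain ⟨b, hb⟩ := Orthonormal.exists_orthonormalBasis_extension_of_card_eq (𝕜 := ℝ) (ι := Fin 4)
    (by simpa using hdim) (v := fun _ => e) (s := {0}) (by simp [orthonormal_subsingleton_iff, he])
  have hbe : b 0 = e := hb 0 rfl
  have horth : ∀ m n, ⟪b m, b n⟫ = if m = n then 1 else 0 := orthonormal_iff_ite.1 b.orthonormal
  obtain ⟨ρ, hI, hJ, hρ⟩ := exists_algHom_quaternion_of_norm_mul hN (i := b 1) (j := b 2) hl
    (b.norm_eq_one _) (b.norm_eq_one _) (by simp [← hbe, horth]) (by simp [← hbe, horth])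
    (by simp [horth])
  let ψ : ℍ[ℝ] ≃ₗᵢ[ℝ] V := LinearIsometry.toLinearIsometryEquiv
    ⟨(LinearMap.applyₗ e).comp ρ.toLinearMap, fun q => by simp [hρ, he]⟩
    (by rw [hdim, Quaternion.finrank_eq_four])
  have hψ : ∀ q, ψ q = ρ q e := fun _ => rfl
  have hψ1 : ψ 1 = e := by rw [hψ, map_one, Module.End.one_apply]
  have hNψ : ∀ q, N (ψ q) = ρ q :=
    apply_eq_algHom_quaternion (fun q => by rw [hψ1, hψ]) hN (by rwa [hψ1]) (by rwa [hψ1])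
      (by rw [hψ, hI, hr]) (by rw [hψ, hJ, hr])
  refine ⟨ψ.symm, fun x y => ψ.injective ?_⟩
  rw [ψ.apply_symm_apply, hψ, map_mul, ← hNψ, Module.End.mul_apply, ← hψ, ψ.apply_symm_apply,
    ψ.apply_symm_apply]

theorem exists_isotopy_quaternion_of_inner (hdim : Module.finrank ℝ V = 4)
    {mul : V →ₗ[ℝ] V →ₗ[ℝ] V} (hmul : ∀ x y, ‖mul x y‖ = ‖x‖ * ‖y‖) :
    ∃ (e : V ≃ₗ[ℝ] ℍ[ℝ]) (F G : ℍ[ℝ] ≃ₗᵢ[ℝ] ℍ[ℝ]), ∀ x y, e (mul x y) = F (e x) * G (e y) := by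
  have : FiniteDimensional ℝ V := .of_finrank_pos (by omega)
  have : Nontrivial V := Module.nontrivial_of_finrank_pos (R := ℝ) (by omega)
  obtain ⟨a, ha⟩ := exists_norm_eq V zero_le_one
  let L : V ≃ₗᵢ[ℝ] V := LinearIsometry.toLinearIsometryEquiv
    ⟨mul a, fun x => by rw [hmul, ha, one_mul]⟩ rfl
  let R : V ≃ₗᵢ[ℝ] V := LinearIsometry.toLinearIsometryEquiv
    ⟨mul.flip a, fun x => by rw [LinearMap.flip_apply, hmul, ha, mul_one]⟩ rfl
  have hL : ∀ x, L x = mul a x := fun _ => rfl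
  have hR : ∀ x, R x = mul x a := fun _ => rfl
  let N : V →ₗ[ℝ] V →ₗ[ℝ] V :=
    mul.compl₁₂ R.symm.toLinearEquiv.toLinearMap L.symm.toLinearEquiv.toLinearMap
  have hN : ∀ x y, N x y = mul (R.symm x) (L.symm y) := fun _ _ => rfl
  obtain ⟨φ, hφ⟩ := exists_linearIsometryEquiv_quaternion hdim (N := N) (e := mul a a)
    (fun x y => by rw [hN, hmul, R.symm.norm_map, L.symm.norm_map])
    (by rw [hmul, ha, one_mul])
    (LinearMap.ext fun x => by
      rw [hN, ← hR, R.symm_apply_apply, ← hL, L.apply_symm_apply, Module.End.one_apply])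
    (fun x => by rw [hN, ← hL, L.symm_apply_apply, ← hR, R.apply_symm_apply])
  refine ⟨φ.toLinearEquiv, (φ.symm.trans R).trans φ, (φ.symm.trans L).trans φ, fun x y => ?_⟩
  simp [← hφ, hN]

end Composition

theorem exists_isotopy_quaternion {A : Type*} [NormedAddCommGroup A] [NormedSpace ℝ A]
    (hdim : Module.finrank ℝ A = 4) {mul : A →ₗ[ℝ] A →ₗ[ℝ] A}
    (hmul : ∀ x y, ‖mul x y‖ = ‖x‖ * ‖y‖) :
    ∃ (e : A ≃ₗ[ℝ] Quaternion ℝ) (F G : Quaternion ℝ ≃ₗᵢ[ℝ] Quaternion ℝ),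
      ∀ x y, e (mul x y) = F (e x) * G (e y) := by
  have : FiniteDimensional ℝ A := .of_finrank_pos (by omega)
  have : Nontrivial A := Module.nontrivial_of_finrank_pos (R := ℝ) (by omega)
  let : InnerProductSpace ℝ A :=
    InnerProductSpace.ofNorm (𝕜 := ℝ) (parallelogram_law_of_norm_mul mul hmul)
  exact exists_isotopy_quaternion_of_inner hdim hmul

/-- The group of unit quaternions. -/
abbrev UnitQuaternion : Type := unitary (Quaternion ℝ)

section Isometries

open Quaternion
open scoped RealInnerProductSpace

theorem mem_unitary_quaternion_iff {q : ℍ[ℝ]} : q ∈ unitary ℍ[ℝ] ↔ ‖q‖ = 1 := by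
  rw [Unitary.mem_iff, star_mul_self, self_mul_star, and_self, ← coe_one, coe_inj,
    normSq_eq_norm_mul_self, ← sq, pow_eq_one_iff_of_nonneg (norm_nonneg q) two_ne_zero]

theorem exists_unitQuaternion_smul_eq {q : ℍ[ℝ]} (hq : q ≠ 0) :
    ∃ u : UnitQuaternion, ‖q‖ • (u : ℍ[ℝ]) = q :=
  ⟨⟨‖q‖⁻¹ • q, mem_unitary_quaternion_iff.2 (norm_smul_inv_norm (𝕜 := ℝ) hq)⟩,
    smul_inv_smul₀ (norm_ne_zero_iff.2 hq) q⟩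

theorem reflection_span_unitQuaternion_orthogonal (u : UnitQuaternion) (x : ℍ[ℝ]) :
    (ℝ ∙ (u : ℍ[ℝ]))ᗮ.reflection x = -(u * star x * u) := by
  have hinner : 2 * (⟪(u : ℍ[ℝ]), x⟫ : ℍ[ℝ]) = u * star x + x * star (u : ℍ[ℝ]) := by
    rw [Quaternion.inner_def, ← self_add_star, star_mul, star_star]
  have hu : ‖(u : ℍ[ℝ])‖ = 1 := mem_unitary_quaternion_iff.1 u.2
  rw [Submodule.reflection_orthogonal_apply, Submodule.reflection_singleton_apply, hu, neg_inj,
    sub_eq_iff_eq_add]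
  simp only [RCLike.ofReal_real_eq_id, id, one_pow, div_one]
  rw [← coe_mul_eq_smul, two_smul, ← two_mul, ← mul_assoc, hinner, add_mul, mul_assoc x,
    Unitary.coe_star_mul_self, mul_one]

theorem exists_unitQuaternion_reflection_orthogonal {v : ℍ[ℝ]} (hv : v ≠ 0) :
    ∃ u : UnitQuaternion, ∀ x, (ℝ ∙ v)ᗮ.reflection x = -(u * star x * u) := by
  obtain ⟨u, hu⟩ := exists_unitQuaternion_smul_eq hv
  have hspan : ℝ ∙ v = ℝ ∙ (u : ℍ[ℝ]) := by
    rw [← hu, Submodule.span_singleton_smul_eq (by simpa using hv)]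
  exact ⟨u, fun x => by simp only [hspan, reflection_span_unitQuaternion_orthogonal]⟩

theorem exists_unitQuaternion_of_linearIsometryEquiv (φ : ℍ[ℝ] ≃ₗᵢ[ℝ] ℍ[ℝ]) :
    ∃ a b : UnitQuaternion, (∀ x, φ x = a * x * b) ∨ ∀ x, φ x = a * star x * b := by
  obtain ⟨l, -, rfl⟩ := φ.reflections_generate_dim
  induction l with
  | nil => exact ⟨1, 1, .inl fun x => by simp⟩
  | cons v l ih =>
    obtain ⟨a, b, hab⟩ := ih
    rcases eq_or_ne v 0 with rfl | hv
    · have hid : ∀ x : ℍ[ℝ], (ℝ ∙ (0 : ℍ[ℝ]))ᗮ.reflection x = x := fun x =>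
        Submodule.reflection_mem_subspace_eq_self (by simp)
      exact ⟨a, b, by
        simpa only [List.map_cons, List.prod_cons, LinearIsometryEquiv.coe_mul, Function.comp_apply,
          hid] using hab⟩
    obtain ⟨u, hu⟩ := exists_unitQuaternion_reflection_orthogonal hv
    rcases hab with hab | hab
    · exact ⟨-(u * star b), star a * u, .inr fun x => by simp [hu, hab, mul_assoc, Unitary.coe_neg]⟩
    · exact ⟨-(u * star b), star a * u, .inl fun x => by simp [hu, hab, mul_assoc, Unitary.coe_neg]⟩

end Isometries

/-- The identity `(x², x², x) = 0` for a binary operation. -/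
def SquareAssociative {G : Type*} (op : G → G → G) : Prop :=
  ∀ x, op (op (op x x) (op x x)) x = op (op x x) (op (op x x) x)

namespace SquareAssociative

theorem of_injective {G H : Type*} {op : G → G → G} {op' : H → H → H} (h : SquareAssociative op')
    {f : G → H} (hf : Function.Injective f) (hop : ∀ x y, f (op x y) = op' (f x) (f y)) :
    SquareAssociative op := fun x => hf <| by simpa only [hop] using h (f x)

section

variable {G : Type*} [Group G] {a b : G}

theorem commute_of_mul_mul (h : SquareAssociative fun x y => a * x * y * b) : Commute a b := by
  have h1 := h 1
  simp only [mul_one] at h1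
  exact mul_left_cancel (a := a * a) (mul_right_cancel (b := a * b * b * b)
    (by simpa [mul_assoc] using h1))

theorem commute_of_mul_mul_of_mul_self [HasDistribNeg G]
    (h : SquareAssociative fun x y => a * x * y * b) {x : G} (hx : x * x = -1) :
    Commute b x := by
  have hcomm : a * (a * b) = a * b * a := ((Commute.refl a).mul_right h.commute_of_mul_mul).eq
  have hxx : a * x * x * b = -(a * b) := by simp [mul_assoc a, hx]
  have hW : a * (a * b) * (a * (a * b)) * (b * x) * b =
      a * (a * b) * (a * (a * b)) * (x * b) * b := by
    have := h x
    simp only [hxx, mul_neg, neg_mul, neg_neg] at this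
    calc _ = a * (a * b * a) * (a * b) * b * x * b := by simp only [mul_assoc]
      _ = a * (a * (a * b) * (a * b) * b) * x * b := by rw [← hcomm]; simp only [mul_assoc]
      _ = _ := by rw [this]; simp only [mul_assoc]
  exact mul_left_cancel (mul_right_cancel hW)

theorem commute_mul_self_of_mul_mul (h : SquareAssociative fun x y => a * x * y) (x : G) :
    Commute a (x * x) :=
  mul_left_cancel (a := a * a) (mul_right_cancel (b := a * x * x * x)
    (by simpa [mul_assoc] using h x))

theorem mul_eq_one_of_mul_inv (h : SquareAssociative fun x y => a * x * b * y⁻¹) :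
    a * a * (a * b * a⁻¹ * b) = 1 := by
  simpa [mul_assoc] using h 1

theorem semiconjBy_inv_of_mul_inv (h : SquareAssociative fun x y => a * x * b * y⁻¹) {x : G}
    (hx : Commute b x) : SemiconjBy (a * a * b * b) x x⁻¹ := by
  have hxx : a * x * b * x⁻¹ = a * b := by
    rw [mul_assoc a, ← hx.eq]
    group
  have h' := h x
  simp only [hxx] at h'
  refine mul_inv_eq_iff_eq_mul.1 ?_
  calc _ = a * (a * b) * b * (a * (a * b) * b * x⁻¹)⁻¹ := by group
    _ = a * a * (a * b * a⁻¹ * b) * x⁻¹ := by rw [← h']; group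
    _ = x⁻¹ := by rw [h.mul_eq_one_of_mul_inv, one_mul]

theorem mul_self_semiconjBy_inv_of_mul_inv (h : SquareAssociative fun x y => a * x * b * y⁻¹) :
    SemiconjBy (a * a) b b⁻¹ :=
  mul_right_cancel (b := b * b)
    (by simpa [SemiconjBy, mul_assoc] using (h.semiconjBy_inv_of_mul_inv (Commute.refl b)).eq)

theorem mul_self_mul_mul_self_of_mul_inv (h : SquareAssociative fun x y => a * x * b * y⁻¹) :
    a * a * (a * a) = 1 := by
  have hb := h.mul_self_semiconjBy_inv_of_mul_inv
  have hxx : a * (a * a)⁻¹ * b * (a * a)⁻¹⁻¹ = a * b⁻¹ := by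
    rw [inv_inv, mul_assoc (a * _), ← inv_inv b, ← hb.inv_right.eq]
    group
  have h' := h (a * a)⁻¹
  simp only [hxx] at h'
  calc a * a * (a * a) = a * a * (a * b * a⁻¹ * b) * (a * a) * (a * a) := by
        rw [h.mul_eq_one_of_mul_inv, one_mul]
    _ = a * (a * (a * b⁻¹) * b * (a * b⁻¹)⁻¹) * b * (a * a)⁻¹⁻¹ * (a * a) := by
        simp [mul_assoc]
    _ = 1 := by rw [h']; group

theorem inv_eq_self_of_mul_inv (h : SquareAssociative fun x y => a * x * b * y⁻¹)
    (hG : ∀ q : G, q * q = 1 → q ∈ Subgroup.center G) (x : G) : x⁻¹ = x := by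
  have hq : ∀ {q : G}, q * q = 1 → ∀ x, Commute q x := fun hq x =>
    (Subgroup.mem_center_iff.1 (hG _ hq) x).symm
  have hb : b⁻¹ = b := by
    have := (hq h.mul_self_mul_mul_self_of_mul_inv b).eq
    rw [h.mul_self_semiconjBy_inv_of_mul_inv.eq] at this
    exact mul_right_cancel this
  have hbb : b * b = 1 := by nth_rw 1 [← hb, inv_mul_cancel]
  have haa : a * a = 1 := by
    have h1 := h.mul_eq_one_of_mul_inv
    rwa [(hq hbb a⁻¹).right_comm, mul_inv_cancel, one_mul, hbb, mul_one] at h1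
  simpa [haa, mul_assoc, hbb] using (h.semiconjBy_inv_of_mul_inv (hq hbb x)).eq.symm

theorem mul_eq_of_inv_inv (h : SquareAssociative fun x y => a * x⁻¹ * y⁻¹ * b) :
    a * b = a⁻¹ * b⁻¹ :=
  mul_right_cancel (b := a * b * a⁻¹ * b) (by simpa [mul_assoc] using h 1)

theorem conj_mul_eq_neg_of_inv_inv [HasDistribNeg G]
    (h : SquareAssociative fun x y => a * x⁻¹ * y⁻¹ * b) {x : G} (hx : x * x = -1) :
    a * b * a⁻¹ * x = -(x * (a * b * a⁻¹)) := by
  have hinv : x⁻¹ = -x := by rw [inv_eq_iff_mul_eq_one, mul_neg, hx, neg_neg]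
  have hs : a * x⁻¹ * x⁻¹ * b = -(a * b) := by simp [hinv, mul_assoc a, hx]
  have h' := h x
  simp only [hs, inv_neg, neg_mul, mul_neg, neg_neg] at h'
  have h₃ : a * b⁻¹ * (a * b) * (a * b * a⁻¹ * x⁻¹) * b =
      a * b⁻¹ * (a * b) * (x * (a * b * a⁻¹)) * b := by
    calc _ = a * (a * (a * b)⁻¹ * (a * b)⁻¹ * b)⁻¹ * x⁻¹ * b := by group
      _ = a * b⁻¹ * (a⁻¹ * b⁻¹) * (x * (a * b * a⁻¹)) * b := by rw [h']; group
      _ = _ := by rw [← h.mul_eq_of_inv_inv]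
  rw [← mul_left_cancel (mul_right_cancel h₃), hinv, mul_neg, neg_neg]

theorem commute_of_inv_mul (h : SquareAssociative fun x y => x⁻¹ * a * y * b) : Commute a b :=
  mul_left_cancel (a := b⁻¹ * b⁻¹ * a⁻¹) (mul_right_cancel (b := b)
    (by simpa [mul_assoc] using (h 1).symm))

theorem commute_of_inv_mul_one (h : SquareAssociative fun x y => x⁻¹ * y * b) (x : G) :
    Commute b x :=
  mul_left_cancel (a := b⁻¹) (mul_right_cancel (b := b) (by simpa [mul_assoc] using h x))

theorem mul_self_eq_of_inv_mul (h : SquareAssociative fun x y => x⁻¹ * a * y * b) {x : G}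
    (ha : SemiconjBy x a a⁻¹) (hb : SemiconjBy x b b⁻¹) : a * a * (a * a) = b * b := by
  have hab : Commute a b := h.commute_of_inv_mul
  have hxx : x⁻¹ * a * x * b = a⁻¹ * b := by
    rw [mul_assoc x⁻¹, ← inv_inv a, ← ha.inv_right.eq]
    group
  have h' := h x
  simp only [hxx] at h'
  simp only [mul_inv_rev, inv_inv, mul_assoc, hb.eq, inv_mul_cancel_left,
    mul_inv_cancel_left, hab.symm.inv_left.left_comm, hab.symm.inv_inv.left_comm] at h'
  have hx : b⁻¹ * b⁻¹ * x = a * a * (a * a) * (b * b)⁻¹ * (b⁻¹ * b⁻¹ * x) := by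
    simpa only [mul_inv_rev, mul_assoc] using h'
  exact mul_inv_eq_one.1 (right_eq_mul.1 hx)

theorem conj_of_inv_mul (h : SquareAssociative fun x y => x⁻¹ * a * y * (a * a)) {x y z : G}
    (hy : SemiconjBy x y a) (hz : SemiconjBy x a z) :
    y⁻¹ * a⁻¹ * y * a = a * a * (y⁻¹ * a⁻¹ * y⁻¹ * a * z * z) * (a * a)⁻¹ := by
  obtain rfl : y = x⁻¹ * a * x := by
    rw [mul_assoc, ← hy.eq, inv_mul_cancel_left]
  obtain rfl : z = x * a * x⁻¹ := eq_mul_inv_of_mul_eq hz.eq.symm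
  exact mul_left_cancel (a := (a * a)⁻¹) (mul_right_cancel (b := a * a * x * (a * a))
    (by simpa [mul_assoc] using h x))

end

end SquareAssociative

section UnitQuaternion

open Quaternion

namespace UnitQuaternion

/-- `quatI` as a unit quaternion. -/
def i : UnitQuaternion := ⟨quatI, by simp [Unitary.mem_iff, star_quatI, quatI_mul_self]⟩

/-- `quatJ` as a unit quaternion. -/
def j : UnitQuaternion := ⟨quatJ, by simp [Unitary.mem_iff, star_quatJ, quatJ_mul_self]⟩

@[simp] theorem coe_i : (i : ℍ[ℝ]) = quatI := rfl

@[simp] theorem coe_j : (j : ℍ[ℝ]) = quatJ := rfl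

@[simp] theorem coe_inv (q : UnitQuaternion) : ((q⁻¹ : UnitQuaternion) : ℍ[ℝ]) = star (q : ℍ[ℝ]) :=
  rfl

@[simp] theorem star_mul_cancel_left (q : UnitQuaternion) (x : ℍ[ℝ]) :
    star (q : ℍ[ℝ]) * (q * x) = x := by
  rw [← mul_assoc, Unitary.star_mul_self_of_mem q.2, one_mul]

@[simp] theorem mul_star_cancel_left (q : UnitQuaternion) (x : ℍ[ℝ]) :
    (q : ℍ[ℝ]) * (star (q : ℍ[ℝ]) * x) = x := by
  rw [← mul_assoc, Unitary.mul_star_self_of_mem q.2, one_mul]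

theorem i_mul_self : i * i = -1 := Subtype.ext quatI_mul_self

theorem j_mul_self : j * j = -1 := Subtype.ext quatJ_mul_self

theorem j_mul_i : j * i = -(i * j) := Subtype.ext quatJ_mul_quatI

theorem ne_neg_self (q : UnitQuaternion) : q ≠ -q := fun h => by
  have htwo : (2 : ℝ) • (q : ℍ[ℝ]) = 0 := by
    rw [two_smul, ← eq_neg_iff_add_eq_zero]
    exact congrArg Subtype.val h
  have hq : (q : ℍ[ℝ]) = 0 := (smul_eq_zero.1 htwo).resolve_left two_ne_zero
  simpa [hq] using mem_unitary_quaternion_iff.1 q.2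

theorem eq_one_or_eq_neg_one_of_mul_self {q : UnitQuaternion} (hq : q * q = 1) :
    q = 1 ∨ q = -1 :=
  (mul_self_eq_one_iff.1 (congrArg Subtype.val hq)).imp Subtype.ext Subtype.ext

theorem re_sq_add_imI_sq_add_imJ_sq_add_imK_sq (q : UnitQuaternion) :
    (q : ℍ[ℝ]).re ^ 2 + (q : ℍ[ℝ]).imI ^ 2 + (q : ℍ[ℝ]).imJ ^ 2 + (q : ℍ[ℝ]).imK ^ 2 = 1 := by
  rw [← normSq_def', normSq_eq_norm_mul_self, mem_unitary_quaternion_iff.1 q.2, one_mul]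

theorem commute_i_iff {q : UnitQuaternion} :
    Commute q i ↔ (q : ℍ[ℝ]).imJ = 0 ∧ (q : ℍ[ℝ]).imK = 0 := by
  rw [commute_iff_eq, Subtype.ext_iff, Quaternion.ext_iff]
  simp [self_eq_neg, neg_eq_self, and_comm]

theorem coe_eq_of_commute_i {q : UnitQuaternion} (hq : Commute q i) :
    (q : ℍ[ℝ]) = (q : ℍ[ℝ]).re • 1 + (q : ℍ[ℝ]).imI • quatI := by
  obtain ⟨hJ, hK⟩ := commute_i_iff.1 hq
  simpa [hJ, hK] using (smul_add_smul_quatI_add_smul_quatJ (q : ℍ[ℝ])).symm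

theorem re_sq_add_imI_sq_of_commute_i {q : UnitQuaternion} (hq : Commute q i) :
    (q : ℍ[ℝ]).re ^ 2 + (q : ℍ[ℝ]).imI ^ 2 = 1 := by
  have h := re_sq_add_imI_sq_add_imJ_sq_add_imK_sq q
  rw [commute_i_iff] at hq
  simpa [hq.1, hq.2] using h

theorem eq_one_or_eq_neg_one_of_imI_eq_zero {q : UnitQuaternion} (hq : Commute q i)
    (hI : (q : ℍ[ℝ]).imI = 0) : q = 1 ∨ q = -1 := by
  have hre : (q : ℍ[ℝ]).re = 1 ∨ (q : ℍ[ℝ]).re = -1 := by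
    simpa [hI] using re_sq_add_imI_sq_of_commute_i hq
  exact hre.imp (fun h => Subtype.ext (by simpa [hI, h] using coe_eq_of_commute_i hq))
    fun h => Subtype.ext (by simpa [hI, h, Unitary.coe_neg] using coe_eq_of_commute_i hq)

theorem eq_i_or_eq_neg_i_of_re_eq_zero {q : UnitQuaternion} (hq : Commute q i)
    (hre : (q : ℍ[ℝ]).re = 0) : q = i ∨ q = -i := by
  have hI : (q : ℍ[ℝ]).imI = 1 ∨ (q : ℍ[ℝ]).imI = -1 := by
    simpa [hre] using re_sq_add_imI_sq_of_commute_i hq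
  exact hI.imp (fun h => Subtype.ext (by simpa [hre, h] using coe_eq_of_commute_i hq))
    fun h => Subtype.ext (by simpa [hre, h, Unitary.coe_neg] using coe_eq_of_commute_i hq)

theorem semiconjBy_j_of_commute_i {q : UnitQuaternion} (hq : Commute q i) : SemiconjBy j q q⁻¹ := by
  refine Subtype.ext ?_
  obtain ⟨hJ, hK⟩ := commute_i_iff.1 hq
  ext <;> simp [hJ, hK]

theorem eq_one_or_eq_neg_one_of_forall_commute {q : UnitQuaternion}
    (hq : ∀ x : UnitQuaternion, x * x = -1 → Commute q x) : q = 1 ∨ q = -1 := by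
  have hi : Commute q i := hq i i_mul_self
  have hj : SemiconjBy j q q⁻¹ := semiconjBy_j_of_commute_i hi
  refine eq_one_or_eq_neg_one_of_mul_self ?_
  rw [SemiconjBy, ← (hq j j_mul_self).eq] at hj
  rw [mul_eq_one_iff_eq_inv, ← mul_right_cancel hj]

theorem mem_center_of_mul_self {q : UnitQuaternion} (hq : q * q = 1) :
    q ∈ Subgroup.center UnitQuaternion := by
  rw [Subgroup.mem_center_iff]
  rcases eq_one_or_eq_neg_one_of_mul_self hq with rfl | rfl <;> simp

theorem exists_coe_eq_and_mul_self_eq {q : UnitQuaternion} (hq : q * q = -1) :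
    ∃ x : UnitQuaternion, (x : ℍ[ℝ]) = (√2)⁻¹ • (1 + (q : ℍ[ℝ])) ∧ x * x = q := by
  have hqq : (q : ℍ[ℝ]) * q = -1 := congrArg Subtype.val hq
  have hstar : star (q : ℍ[ℝ]) = -q := by
    rw [← coe_inv, inv_eq_of_mul_eq_one_right (b := -q) (by rw [mul_neg, hq, neg_neg])]; rfl
  have hsqrt : (√2)⁻¹ * (√2)⁻¹ = (2 : ℝ)⁻¹ := by
    rw [← mul_inv, Real.mul_self_sqrt zero_le_two]
  refine ⟨⟨(√2)⁻¹ • (1 + (q : ℍ[ℝ])), Unitary.mem_iff.2 ⟨?_, ?_⟩⟩, rfl, Subtype.ext ?_⟩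
  all_goals
    simp only [Submonoid.mk_mul_mk, Quaternion.star_smul, star_add, star_one, hstar, smul_mul_smul,
      hsqrt, add_mul, mul_add, mul_neg, neg_mul, one_mul, mul_one, hqq]
    module

theorem exists_commute_i_conj (q : UnitQuaternion) :
    ∃ p : UnitQuaternion, Commute (p * q * p⁻¹) i := by
  let n : ℝ := √((q : ℍ[ℝ]).imI ^ 2 + (q : ℍ[ℝ]).imJ ^ 2 + (q : ℍ[ℝ]).imK ^ 2)
  have hn : n ^ 2 = (q : ℍ[ℝ]).imI ^ 2 + (q : ℍ[ℝ]).imJ ^ 2 + (q : ℍ[ℝ]).imK ^ 2 :=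
    Real.sq_sqrt (by positivity)
  -- `w` bisects the angle between the imaginary part of `q` and its rotation onto the axis of `i`,
  -- so conjugation by `w` exchanges the two.
  let w : ℍ[ℝ] := n • quatI + (q : ℍ[ℝ]).im
  by_cases hw : w = 0
  · refine ⟨1, commute_i_iff.2 ?_⟩
    have hJ := congrArg QuaternionAlgebra.imJ hw
    have hK := congrArg QuaternionAlgebra.imK hw
    exact ⟨by simpa [w] using hJ, by simpa [w] using hK⟩
  have hwq : w * q = ((q : ℍ[ℝ]).re • 1 + n • quatI) * w := by
    ext <;> simp [w]
    · linear_combination hn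
    all_goals ring
  obtain ⟨p, hp⟩ := exists_unitQuaternion_smul_eq hw
  have hpq : (p : ℍ[ℝ]) * q = ((q : ℍ[ℝ]).re • 1 + n • quatI) * p := by
    rw [← hp, smul_mul_assoc, mul_smul_comm] at hwq
    exact smul_right_injective _ (norm_ne_zero_iff.2 hw) hwq
  have hcoe : ((p * q * p⁻¹ : UnitQuaternion) : ℍ[ℝ]) = (q : ℍ[ℝ]).re • 1 + n • quatI := by
    rw [Submonoid.coe_mul, Submonoid.coe_mul, hpq, coe_inv, mul_assoc,
      Unitary.mul_star_self_of_mem p.2, mul_one]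
  exact ⟨p, commute_i_iff.2 (by simp [hcoe])⟩

theorem commute_i_of_commute {p q : UnitQuaternion} (hp : Commute p i)
    (hI : (p : ℍ[ℝ]).imI ≠ 0) (hpq : Commute p q) : Commute q i := by
  obtain ⟨hJ, hK⟩ := commute_i_iff.1 hp
  rw [commute_iff_eq, Subtype.ext_iff, Quaternion.ext_iff] at hpq
  simp only [Submonoid.coe_mul, imJ_mul, imK_mul, hJ, hK] at hpq
  refine commute_i_iff.2 ⟨mul_left_cancel₀ hI ?_, mul_left_cancel₀ hI ?_⟩ <;>
    linarith [hpq.2.2.1, hpq.2.2.2]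

theorem exists_semiconjBy_inv_of_commute_i {q : UnitQuaternion} (hq : Commute q i) :
    ∃ x y : UnitQuaternion, SemiconjBy x y q ∧ SemiconjBy x q y⁻¹ ∧
      (y : ℍ[ℝ]) = (q : ℍ[ℝ]).re • 1 + (q : ℍ[ℝ]).imI • (quatI * quatJ) := by
  obtain ⟨x, hx, -⟩ := exists_coe_eq_and_mul_self_eq j_mul_self
  obtain ⟨hJ, hK⟩ := commute_i_iff.1 hq
  have hqx : (q : ℍ[ℝ]) * x =
      x * ((q : ℍ[ℝ]).re • 1 + (q : ℍ[ℝ]).imI • (quatI * quatJ)) := by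
    ext <;> simp [hx, hJ, hK, mul_comm]
  have hy : ((x⁻¹ * q * x : UnitQuaternion) : ℍ[ℝ]) =
      (q : ℍ[ℝ]).re • 1 + (q : ℍ[ℝ]).imI • (quatI * quatJ) := by
    rw [mul_assoc, Submonoid.coe_mul, Submonoid.coe_mul, hqx, coe_inv, star_mul_cancel_left]
  refine ⟨x, x⁻¹ * q * x, ?_, Subtype.ext ?_, hy⟩
  · rw [SemiconjBy, mul_assoc, mul_inv_cancel_left]
  · rw [Submonoid.coe_mul, Submonoid.coe_mul, coe_inv, hy]
    ext <;> simp [hx, hJ, hK, mul_comm]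

theorem re_eq_zero_of_conj_eq {a y c : UnitQuaternion} (ha : Commute a i)
    (hI : (a : ℍ[ℝ]).imI ≠ 0)
    (hy : (y : ℍ[ℝ]) = (a : ℍ[ℝ]).re • 1 + (a : ℍ[ℝ]).imI • (quatI * quatJ))
    (h : y⁻¹ * a⁻¹ * y * a = c * (y⁻¹ * a⁻¹ * y⁻¹ * a * y⁻¹ * y⁻¹) * c⁻¹) :
    (a : ℍ[ℝ]).re = 0 := by
  have hre : ((y⁻¹ * a⁻¹ * y * a : UnitQuaternion) : ℍ[ℝ]).re =
      ((y⁻¹ * a⁻¹ * y⁻¹ * a * y⁻¹ * y⁻¹ : UnitQuaternion) : ℍ[ℝ]).re := by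
    rw [h, Submonoid.coe_mul, re_mul_comm, ← Submonoid.coe_mul, mul_assoc, inv_mul_cancel_left]
  obtain ⟨hJ, hK⟩ := commute_i_iff.1 ha
  simp only [Submonoid.coe_mul, coe_inv, hy, star_add, Quaternion.star_smul, star_one, star_mul,
    re_mul, re_add, re_smul, re_one, smul_eq_mul, mul_one, re_star, re_quatJ, re_quatI, mul_zero,
    imI_star, imI_quatJ, neg_zero, imI_quatI, mul_neg, sub_self, imJ_star, imJ_quatJ, imJ_quatI,
    imK_star, imK_quatJ, imK_quatI, add_zero, imI_add, imI_smul, imI_one, imI_mul, zero_mul,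
    sub_zero, imJ_add, imJ_smul, imJ_one, imJ_mul, hJ, imK_add, imK_smul, imK_one, imK_mul, neg_neg,
    zero_sub, zero_add, hK, neg_mul, sub_neg_eq_add] at hre
  -- As `re ^ 2 + imI ^ 2 = 1`, the two real parts differ by `8 * re ^ 4 * imI ^ 2`.
  have hzero : 8 * (a : ℍ[ℝ]).re ^ 4 * (a : ℍ[ℝ]).imI ^ 2 = 0 := by
    linear_combination hre + ((a : ℍ[ℝ]).re ^ 4 + 2 * (a : ℍ[ℝ]).re ^ 2 * (a : ℍ[ℝ]).imI ^ 2 -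
      (a : ℍ[ℝ]).imI ^ 4) * re_sq_add_imI_sq_of_commute_i ha
  simpa [hI] using hzero

end UnitQuaternion

namespace SquareAssociative

open UnitQuaternion

variable {a b : UnitQuaternion}

theorem eq_one_or_eq_neg_one_of_mul_mul (h : SquareAssociative fun x y => a * x * y * b) :
    (a = 1 ∨ a = -1) ∧ (b = 1 ∨ b = -1) := by
  have hb := eq_one_or_eq_neg_one_of_forall_commute fun x => h.commute_of_mul_mul_of_mul_self
  have ha : SquareAssociative fun x y => a * x * y := by
    rcases hb with rfl | rfl
    · simpa using h
    · exact h.of_injective neg_injective fun x y => by simp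
  refine ⟨eq_one_or_eq_neg_one_of_forall_commute fun q hq => ?_, hb⟩
  obtain ⟨x, -, rfl⟩ := exists_coe_eq_and_mul_self_eq hq
  exact ha.commute_mul_self_of_mul_mul x

theorem not_mul_inv : ¬SquareAssociative fun x y => a * x * b * y⁻¹ := fun h =>
  ne_neg_self 1 <| by
    have hi := h.inv_eq_self_of_mul_inv (fun _ => mem_center_of_mul_self) i
    rw [← i_mul_self, eq_comm, ← inv_eq_iff_mul_eq_one, hi]

theorem not_inv_inv : ¬SquareAssociative fun x y => a * x⁻¹ * y⁻¹ * b := fun h => by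
  have hanti : ∀ {x : UnitQuaternion}, x * x = -1 → a * b * a⁻¹ * x = -(x * (a * b * a⁻¹)) :=
    fun hx => h.conj_mul_eq_neg_of_inv_inv hx
  have hij : i * j * (i * j) = -1 := by
    rw [mul_assoc, ← mul_assoc j, j_mul_i, neg_mul, mul_neg, mul_assoc, j_mul_self, ← mul_assoc,
      i_mul_self, mul_neg_one, neg_neg]
  refine ne_neg_self (i * j * (a * b * a⁻¹)) ?_
  rw [← hanti hij, ← mul_assoc _ i, hanti i_mul_self, neg_mul, mul_assoc i (a * b * a⁻¹),
    hanti j_mul_self, mul_neg, neg_neg, mul_assoc]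

theorem eq_mul_self_or_eq_neg_mul_self_of_inv_mul
    (h : SquareAssociative fun x y => x⁻¹ * a * y * b) (ha : Commute a i)
    (hI : (a : ℍ[ℝ]).imI ≠ 0) : b = a * a ∨ b = -(a * a) := by
  have hab : Commute a b := h.commute_of_inv_mul
  have hbb : a * a * (a * a) = b * b := h.mul_self_eq_of_inv_mul (semiconjBy_j_of_commute_i ha)
    (semiconjBy_j_of_commute_i (commute_i_of_commute ha hI hab))
  have hone : b * (a * a)⁻¹ * (b * (a * a)⁻¹) = 1 := by
    rw [(hab.mul_left hab).inv_left.mul_mul_mul_comm, ← hbb]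
    group
  refine (eq_one_or_eq_neg_one_of_mul_self hone).imp mul_inv_eq_one.1 fun h => ?_
  rw [mul_inv_eq_iff_eq_mul.1 h, neg_one_mul]

theorem re_eq_zero_of_inv_mul (h : SquareAssociative fun x y => x⁻¹ * a * y * b)
    (ha : Commute a i) (hI : (a : ℍ[ℝ]).imI ≠ 0) : (a : ℍ[ℝ]).re = 0 := by
  have h' : SquareAssociative fun x y => x⁻¹ * a * y * (a * a) := by
    rcases h.eq_mul_self_or_eq_neg_mul_self_of_inv_mul ha hI with rfl | rfl
    · exact h
    · exact h.of_injective neg_injective fun x y => by simp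
  obtain ⟨x, y, hxy, hxa, hy⟩ := exists_semiconjBy_inv_of_commute_i ha
  exact re_eq_zero_of_conj_eq ha hI hy (h'.conj_of_inv_mul hxy hxa)

theorem eq_of_inv_mul (h : SquareAssociative fun x y => x⁻¹ * a * y * b) (ha : Commute a i) :
    ((a = 1 ∨ a = -1) ∨ a = i ∨ a = -i) ∧ (b = 1 ∨ b = -1) := by
  by_cases hI : (a : ℍ[ℝ]).imI = 0
  · have ha := eq_one_or_eq_neg_one_of_imI_eq_zero ha hI
    refine ⟨.inl ha, eq_one_or_eq_neg_one_of_forall_commute fun x _ => ?_⟩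
    have h' : SquareAssociative fun x y => x⁻¹ * y * b := by
      rcases ha with rfl | rfl
      · simpa using h
      · exact h.of_injective neg_injective fun x y => by simp
    exact h'.commute_of_inv_mul_one x
  · have hai := eq_i_or_eq_neg_i_of_re_eq_zero ha (h.re_eq_zero_of_inv_mul ha hI)
    have haa : a * a = -1 := by
      rcases hai with rfl | rfl <;> simp [i_mul_self]
    refine ⟨.inr hai, ?_⟩
    simpa [haa, or_comm] using h.eq_mul_self_or_eq_neg_mul_self_of_inv_mul ha hI

end SquareAssociative

end UnitQuaternion

/-- The real algebras with products `m` and `n` are isomorphic. The products are bare binary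
operations, so that they can be written as explicit formulas. -/
def IsIsomorphic {A B : Type*} [AddCommGroup A] [Module ℝ A] [AddCommGroup B] [Module ℝ B]
    (m : A → A → A) (n : B → B → B) : Prop :=
  ∃ e : A ≃ₗ[ℝ] B, ∀ x y, e (m x y) = n (e x) (e y)

namespace IsIsomorphic

variable {A B C : Type*} [AddCommGroup A] [Module ℝ A] [AddCommGroup B] [Module ℝ B]
  [AddCommGroup C] [Module ℝ C] {m : A → A → A} {n : B → B → B} {k : C → C → C}

theorem symm (h : IsIsomorphic m n) : IsIsomorphic n m := by
  obtain ⟨e, he⟩ := h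
  exact ⟨e.symm, fun x y => e.injective (by simp [he])⟩

theorem trans (h : IsIsomorphic m n) (h' : IsIsomorphic n k) : IsIsomorphic m k := by
  obtain ⟨e, he⟩ := h
  obtain ⟨e', he'⟩ := h'
  exact ⟨e.trans e', fun x y => by simp [he, he']⟩

end IsIsomorphic

theorem SquareAssociative.of_isIsomorphic {A B : Type*} [AddCommGroup A] [Module ℝ A]
    [AddCommGroup B] [Module ℝ B] {m : A → A → A} {n : B → B → B} (hn : SquareAssociative n)
    (h : IsIsomorphic m n) : SquareAssociative m := by
  obtain ⟨e, he⟩ := h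
  exact hn.of_injective e.injective he

section NormalForm

open Quaternion UnitQuaternion

theorem squareAssociative_mul {S : Type*} [Semigroup S] :
    SquareAssociative fun x y : S => x * y := fun x => by
  simp only [mul_assoc]

theorem squareAssociative_star_mul {S : Type*} [Semigroup S] [StarMul S] :
    SquareAssociative fun x y : S => star x * y := fun x => by
  simp only [star_mul, star_star, mul_assoc]

theorem squareAssociative_star_mul_mul {R : Type*} [NonUnitalRing R] [StarRing R] {b : R}
    (hb : star b = -b) : SquareAssociative fun x y : R => star x * b * y := fun x => by
  simp only [star_mul, star_neg, star_star, hb, mul_neg, neg_mul, neg_neg, mul_assoc]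

theorem isIsomorphic_of_forall_unitQuaternion {f g : ℍ[ℝ] → ℍ[ℝ] → ℍ[ℝ]} (u v : UnitQuaternion)
    (hfg : ∀ x y, u * f x y * v = g (u * x * v) (u * y * v)) : IsIsomorphic f g := by
  refine ⟨.ofLinearMap (.mulLeft ℝ (u : ℍ[ℝ]) ∘ₗ .mulRight ℝ (v : ℍ[ℝ]))
    (.mulLeft ℝ (star (u : ℍ[ℝ])) ∘ₗ .mulRight ℝ (star (v : ℍ[ℝ]))) ?_ ?_, fun x y => ?_⟩
  · exact LinearMap.ext fun x => by simp [mul_assoc]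
  · exact LinearMap.ext fun x => by simp [mul_assoc]
  · simpa [mul_assoc] using hfg x y

variable {a b c : UnitQuaternion}

theorem SquareAssociative.unitQuaternion {op : UnitQuaternion → UnitQuaternion → UnitQuaternion}
    {f : ℍ[ℝ] → ℍ[ℝ] → ℍ[ℝ]} (h : SquareAssociative f)
    (hop : ∀ x y, (op x y : ℍ[ℝ]) = f x y) : SquareAssociative op :=
  h.of_injective Subtype.val_injective hop

theorem isIsomorphic_mul_of_mul_mul
    (h : SquareAssociative fun x y : ℍ[ℝ] => a * x * b * y * c) :
    IsIsomorphic (fun x y : ℍ[ℝ] => a * x * b * y * c) fun x y : ℍ[ℝ] => x * y := by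
  let c' := b⁻¹ * c * b
  have hform : IsIsomorphic (fun x y : ℍ[ℝ] => a * x * b * y * c)
      fun x y : ℍ[ℝ] => a * x * y * c' :=
    isIsomorphic_of_forall_unitQuaternion 1 b fun x y => by
      simp [c', mul_assoc]
  have hsq : SquareAssociative fun x y : UnitQuaternion => a * x * y * c' :=
    (h.of_isIsomorphic hform.symm).unitQuaternion fun x y => by simp
  obtain ⟨ha, hc⟩ := hsq.eq_one_or_eq_neg_one_of_mul_mul
  refine hform.trans (isIsomorphic_of_forall_unitQuaternion (a * c') 1 fun x y => ?_)
  rcases ha with rfl | rfl <;> rcases hc with hc | hc <;> simp [hc, Unitary.coe_neg]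

theorem isIsomorphic_star_mul_or_of_star_mul
    (h : SquareAssociative fun x y : ℍ[ℝ] => a * star x * b * y * c) :
    IsIsomorphic (fun x y : ℍ[ℝ] => a * star x * b * y * c) (fun x y : ℍ[ℝ] => star x * y) ∨
      IsIsomorphic (fun x y : ℍ[ℝ] => a * star x * b * y * c)
        (fun x y : ℍ[ℝ] => star x * quatI * y) := by
  obtain ⟨p, hp⟩ := exists_commute_i_conj b
  let b' := p * b * p⁻¹
  let c' := p * (a * c * a⁻¹) * p⁻¹
  have hform : IsIsomorphic (fun x y : ℍ[ℝ] => a * star x * b * y * c)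
      fun x y : ℍ[ℝ] => star x * b' * y * c' :=
    isIsomorphic_of_forall_unitQuaternion p (a⁻¹ * p⁻¹) fun x y => by
      simp [b', c', mul_assoc]
  have hsq : SquareAssociative fun x y : UnitQuaternion => x⁻¹ * b' * y * c' :=
    (h.of_isIsomorphic hform.symm).unitQuaternion fun x y => by simp
  obtain ⟨hb | hb, hc⟩ := hsq.eq_of_inv_mul hp
  · refine .inl (hform.trans (isIsomorphic_of_forall_unitQuaternion (b' * c') 1 fun x y => ?_))
    rcases hb with hb | hb <;> rcases hc with hc | hc <;> simp [hb, hc, Unitary.coe_neg]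
  · refine .inr (hform.trans
      (isIsomorphic_of_forall_unitQuaternion (b' * i⁻¹ * c') 1 fun x y => ?_))
    rcases hb with hb | hb <;> rcases hc with hc | hc <;> simp [hb, hc, Unitary.coe_neg]

theorem not_squareAssociative_mul_star :
    ¬SquareAssociative fun x y : ℍ[ℝ] => a * x * b * star y * c := fun h => by
  have hform : IsIsomorphic (fun x y : ℍ[ℝ] => a * x * b * star y * c)
      fun x y : ℍ[ℝ] => (c⁻¹ * a * c : UnitQuaternion) * x * b * star y :=
    isIsomorphic_of_forall_unitQuaternion c⁻¹ 1 fun x y => by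
      simp [mul_assoc]
  exact SquareAssociative.not_mul_inv (a := c⁻¹ * a * c) (b := b)
    ((h.of_isIsomorphic hform.symm).unitQuaternion fun x y => by simp)

theorem not_squareAssociative_star_star :
    ¬SquareAssociative fun x y : ℍ[ℝ] => a * star x * b * star y * c := fun h => by
  have hform : IsIsomorphic (fun x y : ℍ[ℝ] => a * star x * b * star y * c)
      fun x y : ℍ[ℝ] =>
        (b⁻¹ * a : UnitQuaternion) * star x * star y * (b⁻¹ * c : UnitQuaternion) :=
    isIsomorphic_of_forall_unitQuaternion b⁻¹ 1 fun x y => by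
      simp [mul_assoc]
  exact SquareAssociative.not_inv_inv (a := b⁻¹ * a) (b := b⁻¹ * c)
    ((h.of_isIsomorphic hform.symm).unitQuaternion fun x y => by simp)

theorem exists_isIsomorphic_of_norm_mul {A : Type*} [NormedAddCommGroup A] [NormedSpace ℝ A]
    (hdim : Module.finrank ℝ A = 4) {mul : A →ₗ[ℝ] A →ₗ[ℝ] A}
    (hmul : ∀ x y, ‖mul x y‖ = ‖x‖ * ‖y‖) :
    ∃ a b c : UnitQuaternion,
      IsIsomorphic (mul · ·) (fun x y : ℍ[ℝ] => a * x * b * y * c) ∨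
      IsIsomorphic (mul · ·) (fun x y : ℍ[ℝ] => a * star x * b * y * c) ∨
      IsIsomorphic (mul · ·) (fun x y : ℍ[ℝ] => a * x * b * star y * c) ∨
      IsIsomorphic (mul · ·) (fun x y : ℍ[ℝ] => a * star x * b * star y * c) := by
  obtain ⟨e, F, G, he⟩ := exists_isotopy_quaternion hdim hmul
  obtain ⟨a, b, hF⟩ := exists_unitQuaternion_of_linearIsometryEquiv F
  obtain ⟨c, d, hG⟩ := exists_unitQuaternion_of_linearIsometryEquiv G
  refine ⟨a, b * c, d, ?_⟩
  rcases hF with hF | hF <;> rcases hG with hG | hG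
  · exact .inl ⟨e, fun x y => by simp [he, hF, hG, mul_assoc]⟩
  · exact .inr (.inr (.inl ⟨e, fun x y => by simp [he, hF, hG, mul_assoc]⟩))
  · exact .inr (.inl ⟨e, fun x y => by simp [he, hF, hG, mul_assoc]⟩)
  · exact .inr (.inr (.inr ⟨e, fun x y => by simp [he, hF, hG, mul_assoc]⟩))

end NormalForm

/-- A 4-dimensional absolute-valued real algebra satisfies the identity `(x², x², x) = 0`
if and only if it is isomorphic to `ℍ`, to `*ℍ` (product `x ⊙ y = x̄ * y`), or to
`*ℍ(i,1)` (product `x ⊙ y = x̄ * i * y`). -/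
theorem stmt_12 {A : Type*} [NormedAddCommGroup A] [NormedSpace ℝ A]
    (mul : A →ₗ[ℝ] A →ₗ[ℝ] A)
    (habs : ∀ x y : A, ‖mul x y‖ = ‖x‖ * ‖y‖)
    (hdim : Module.finrank ℝ A = 4) :
    (∀ x : A, mul (mul (mul x x) (mul x x)) x = mul (mul x x) (mul (mul x x) x))
      ↔ ((∃ e : A ≃ₗ[ℝ] Quaternion ℝ, ∀ x y : A, e (mul x y) = e x * e y) ∨
          (∃ e : A ≃ₗ[ℝ] Quaternion ℝ, ∀ x y : A, e (mul x y) = star (e x) * e y) ∨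
          (∃ e : A ≃ₗ[ℝ] Quaternion ℝ,
            ∀ x y : A, e (mul x y) = star (e x) * quatI * e y)) := by
  constructor
  · intro (hsq : SquareAssociative (mul · ·))
    obtain ⟨a, b, c, h | h | h | h⟩ := exists_isIsomorphic_of_norm_mul hdim habs
    · exact .inl (h.trans (isIsomorphic_mul_of_mul_mul (hsq.of_isIsomorphic h.symm)))
    · exact .inr ((isIsomorphic_star_mul_or_of_star_mul (hsq.of_isIsomorphic h.symm)).imp
        h.trans h.trans)
    · exact (not_squareAssociative_mul_star (hsq.of_isIsomorphic h.symm)).elim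
    · exact (not_squareAssociative_star_star (hsq.of_isIsomorphic h.symm)).elim
  · intro h
    change SquareAssociative (mul · ·)
    rcases h with h | h | h
    · exact squareAssociative_mul.of_isIsomorphic h
    · exact squareAssociative_star_mul.of_isIsomorphic h
    · exact (squareAssociative_star_mul_mul star_quatI).of_isIsomorphic h
end

section
/- Let A be a 4-dimensional absolute-valued real algebra. Then A satisfies the identity (x², x, x²) = 0 (i.e. (x² x) x² = x² (x x²) for all x ∈ A, where x² = xx) if and only if A is isomorphic to ℍ, to ⁎ℍ, or there exists α ∈ [0,π) such that A is isomorphic to *ℍ(1, e^{iα}) or to ℍ*(e^{iα}, 1). -/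
/-- The quaternion `e^{iα} = cos α + (sin α) i`. -/
noncomputable def quatExpI (α : ℝ) : Quaternion ℝ := ⟨Real.cos α, Real.sin α, 0, 0⟩

/-!
A complex-valued functional `g` with `g ∘ L_y = z • g ∘ L_x`, where `L` is left multiplication,
yields `‖s • x + y‖ = ‖x‖ * ‖s + z‖` for all real `s`, so the norm is Euclidean. After an isotopy
the algebra is unital, the left multiplications by the orthogonal complement of the unit generate
a quaternionic representation, and the algebra is `ℍ`. By Cartan–Dieudonné the isotopy factors are
`x ↦ p x q` or `x ↦ p x̄ q`, and a right translation normalises the product to one of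
`p x y b`, `a x̄ ȳ b`, `x̄ q y b` or the opposite of the latter.

Since `(t + u)²` is a multiple of `u` when `t = ±‖u‖`, the identity `(x², x, x²) = 0` can be
linearised into conjugation identities in the division ring `ℍ`. They force the parameters, except
`b` in the mixed cases, to be central, hence `±1`; there `b` is conjugate to some `±e^{iα}`.
-/

open Module
open scoped Quaternion InnerProductSpace

section EuclideanNorm

theorem exists_functional_comp_eq_smul {V W : Type*} [AddCommGroup V] [Module ℝ V]
    [AddCommGroup W] [Module ℝ W] [FiniteDimensional ℝ W] [Nontrivial W]
    (S : V ≃ₗ[ℝ] W) (T : V →ₗ[ℝ] W) :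
    ∃ (z : ℂ) (g : W →ₗ[ℝ] ℂ), g ≠ 0 ∧ ∀ v, g (T v) = z * g (S v) := by
  have : Nontrivial (W →ₗ[ℝ] ℂ) := by
    obtain ⟨f, hf⟩ := exists_ne (0 : Dual ℝ W)
    refine ⟨Complex.ofRealLI.toLinearMap ∘ₗ f, 0, fun h => hf (LinearMap.ext fun w => ?_)⟩
    simpa using LinearMap.congr_fun h w
  have : FiniteDimensional ℂ (W →ₗ[ℝ] ℂ) := inferInstance
  obtain ⟨z, hz⟩ := End.exists_eigenvalue (LinearMap.lcomp ℂ ℂ (T ∘ₗ S.symm.toLinearMap))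
  obtain ⟨g, hg⟩ := hz.exists_hasEigenvector
  refine ⟨z, g, hg.2, fun v => ?_⟩
  simpa using LinearMap.congr_fun hg.apply_eq_smul (S v)

theorem norm_comp_of_norm_map {V F : Type*} [NormedAddCommGroup V] [NormedSpace ℝ V]
    [FiniteDimensional ℝ V] [NormedAddCommGroup F] [NormedSpace ℝ F]
    (g : V →L[ℝ] F) {T : V →L[ℝ] V} {c : ℝ} (hc : 0 ≤ c) (hT : ∀ v, ‖T v‖ = c * ‖v‖) :
    ‖g.comp T‖ = c * ‖g‖ := by
  rcases hc.eq_or_lt with rfl | hc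
  · have : T = 0 := by ext v; simpa using hT v
    simp [this]
  have hT_surj : Function.Surjective T := by
    refine LinearMap.surjective_of_injective (f := T.toLinearMap) ?_
    refine (injective_iff_map_eq_zero T).2 fun v hv => ?_
    simpa [hv, hc.ne'] using hT v
  refine le_antisymm (ContinuousLinearMap.opNorm_le_bound _ (by positivity) fun v => ?_) ?_
  · calc ‖g (T v)‖ ≤ ‖g‖ * ‖T v‖ := g.le_opNorm _
      _ = c * ‖g‖ * ‖v‖ := by rw [hT]; ring
  · rw [← le_div_iff₀' hc]
    refine ContinuousLinearMap.opNorm_le_bound _ (by positivity) fun w => ?_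
    obtain ⟨v, rfl⟩ := hT_surj w
    calc ‖g (T v)‖ ≤ ‖g.comp T‖ * ‖v‖ := (g.comp T).le_opNorm v
      _ = ‖g.comp T‖ / c * ‖T v‖ := by rw [hT]; field_simp

variable {V W : Type*} [NormedAddCommGroup V] [NormedSpace ℝ V]
  [NormedAddCommGroup W] [NormedSpace ℝ W] [FiniteDimensional ℝ W] [Nontrivial W]
  {m : V →ₗ[ℝ] W →ₗ[ℝ] W}

theorem exists_norm_smul_add_eq_of_norm_mul (hm : ∀ x y, ‖m x y‖ = ‖x‖ * ‖y‖) {x : V}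
    (hx : x ≠ 0) (y : V) : ∃ z : ℂ, ∀ s : ℝ, ‖s • x + y‖ = ‖x‖ * ‖s + z‖ := by
  have hx_inj : Function.Injective (m x) := by
    refine (injective_iff_map_eq_zero _).2 fun w hw => ?_
    simpa [hw, hx] using hm x w
  obtain ⟨z, g, hg, hgz⟩ :=
    exists_functional_comp_eq_smul (LinearEquiv.ofInjectiveEndo (m x) hx_inj) (m y)
  have hg_norm : ‖g.toContinuousLinearMap‖ ≠ 0 := by simpa using hg
  refine ⟨z, fun s => mul_right_cancel₀ hg_norm ?_⟩
  have hcomp : g.toContinuousLinearMap.comp (m (s • x + y)).toContinuousLinearMap =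
      ((s : ℂ) + z) • g.toContinuousLinearMap.comp (m x).toContinuousLinearMap := by
    ext w
    have := hgz w
    simp_all [add_mul]
  rw [← norm_comp_of_norm_map (T := (m (s • x + y)).toContinuousLinearMap) _
    (norm_nonneg _) (hm _), hcomp, norm_smul,
    norm_comp_of_norm_map (T := (m x).toContinuousLinearMap) _ (norm_nonneg _) (hm _)]
  ring

theorem parallelogram_law_of_norm_mul_s19 (hm : ∀ x y, ‖m x y‖ = ‖x‖ * ‖y‖) (x y : V) :
    ‖x + y‖ * ‖x + y‖ + ‖x - y‖ * ‖x - y‖ = 2 * (‖x‖ * ‖x‖ + ‖y‖ * ‖y‖) := by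
  rcases eq_or_ne x 0 with rfl | hx
  · simp [two_mul]
  obtain ⟨z, hz⟩ := exists_norm_smul_add_eq_of_norm_mul hm hx y
  have h_add : ‖x + y‖ = ‖x‖ * ‖1 + z‖ := by simpa using hz 1
  have h_sub : ‖x - y‖ = ‖x‖ * ‖1 - z‖ := by
    simpa [neg_add_eq_sub, norm_sub_rev] using hz (-1)
  have h_y : ‖y‖ = ‖x‖ * ‖z‖ := by simpa using hz 0
  rw [h_add, h_sub, h_y]
  have h_complex := parallelogram_law_with_norm ℝ 1 z
  rw [norm_one] at h_complex
  linear_combination ‖x‖ * ‖x‖ * h_complex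

end EuclideanNorm

section Composition

variable {U V W : Type*} [NormedAddCommGroup U] [InnerProductSpace ℝ U]
  [NormedAddCommGroup V] [InnerProductSpace ℝ V] [NormedAddCommGroup W] [InnerProductSpace ℝ W]
  {m : U →ₗ[ℝ] V →ₗ[ℝ] W}

theorem inner_map_map_right_of_norm_mul (hm : ∀ x y, ‖m x y‖ = ‖x‖ * ‖y‖) (x : U) (y z : V) :
    ⟪m x y, m x z⟫_ℝ = ‖x‖ ^ 2 * ⟪y, z⟫_ℝ := by
  simp only [real_inner_eq_norm_add_mul_self_sub_norm_mul_self_sub_norm_mul_self_div_two,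
    ← map_add, hm]
  ring

theorem inner_map_map_add_inner_map_map_of_norm_mul (hm : ∀ x y, ‖m x y‖ = ‖x‖ * ‖y‖)
    (x y : U) (z w : V) :
    ⟪m x z, m y w⟫_ℝ + ⟪m x w, m y z⟫_ℝ = 2 * ⟪x, y⟫_ℝ * ⟪z, w⟫_ℝ := by
  have hxy := inner_map_map_right_of_norm_mul hm (x + y) z w
  simp only [map_add, LinearMap.add_apply, inner_add_left, inner_add_right,
    inner_map_map_right_of_norm_mul hm, norm_add_sq_real] at hxy
  rw [real_inner_comm (m y z) (m x w)]
  linear_combination hxy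

end Composition

section LeftUnital

variable {V : Type*} [NormedAddCommGroup V] [InnerProductSpace ℝ V] {m : V →ₗ[ℝ] V →ₗ[ℝ] V}
  {e : V}

theorem inner_map_left_eq_neg_of_norm_mul (hm : ∀ x y, ‖m x y‖ = ‖x‖ * ‖y‖)
    (hl : ∀ x, m e x = x) {a : V} (ha : ⟪a, e⟫_ℝ = 0) (x y : V) :
    ⟪m a x, y⟫_ℝ = -⟪x, m a y⟫_ℝ := by
  have h := inner_map_map_add_inner_map_map_of_norm_mul hm a e x y
  rw [ha, hl, hl, real_inner_comm x] at h
  linear_combination h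

theorem map_map_add_map_map_of_norm_mul (hm : ∀ x y, ‖m x y‖ = ‖x‖ * ‖y‖)
    (hl : ∀ x, m e x = x) {a b : V} (ha : ⟪a, e⟫_ℝ = 0) (hb : ⟪b, e⟫_ℝ = 0) (x : V) :
    m a (m b x) + m b (m a x) = -(2 * ⟪a, b⟫_ℝ) • x := by
  refine ext_inner_right ℝ fun y => ?_
  have h := inner_map_map_add_inner_map_map_of_norm_mul hm a b x y
  have hab := inner_map_left_eq_neg_of_norm_mul hm hl ha (m b x) y
  have hba := inner_map_left_eq_neg_of_norm_mul hm hl hb (m a x) y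
  rw [inner_add_left, real_inner_smul_left]
  linear_combination hab + hba - h + real_inner_comm (m b x) (m a y)

end LeftUnital

section CliffordModule

/-- The representation of the quaternions determined by two anticommuting square roots of `-1`. -/
noncomputable def quaternionLift {A : Type*} [Ring A] [Algebra ℝ A] (i j : A) (hi : i * i = -1)
    (hj : j * j = -1) (hji : j * i = -(i * j)) : ℍ[ℝ] →ₐ[ℝ] A :=
  QuaternionAlgebra.Basis.liftHom (c₁ := -1) (c₂ := 0) (c₃ := -1)
    { i, j, k := i * j
      i_mul_i := by simp [hi]
      j_mul_j := by simp [hj]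
      i_mul_j := rfl
      j_mul_i := by simp [hji] }

theorem quaternionLift_apply {A : Type*} [Ring A] [Algebra ℝ A] {i j : A} (hi : i * i = -1)
    (hj : j * j = -1) (hji : j * i = -(i * j)) (q : ℍ[ℝ]) :
    quaternionLift i j hi hj hji q =
      algebraMap ℝ A q.re + q.imI • i + q.imJ • j + q.imK • (i * j) :=
  rfl

theorem apply_quaternionLift_apply_eq_zero_of_anticommute {V : Type*} [AddCommGroup V] [Module ℝ V]
    {i j D : End ℝ V} (hi : i * i = -1) (hj : j * j = -1) (hji : j * i = -(i * j))
    (hDi : D * i = -(i * D)) (hDj : D * j = -(j * D)) {e : V} (hDe : D e = 0) (q : ℍ[ℝ]) :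
    D (quaternionLift i j hi hj hji q e) = 0 := by
  have hDi_apply (x : V) : D (i x) = -i (D x) := LinearMap.congr_fun hDi x
  have hDj_apply (x : V) : D (j x) = -j (D x) := LinearMap.congr_fun hDj x
  simp [quaternionLift_apply, hDi_apply, hDj_apply, hDe, Module.algebraMap_end_apply]

variable {V : Type*} [NormedAddCommGroup V] [InnerProductSpace ℝ V]

theorem inner_quaternionLift_apply_left {i j : End ℝ V} (hi : i * i = -1)
    (hj : j * j = -1) (hji : j * i = -(i * j)) (hi_skew : ∀ x y, ⟪i x, y⟫_ℝ = -⟪x, i y⟫_ℝ)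
    (hj_skew : ∀ x y, ⟪j x, y⟫_ℝ = -⟪x, j y⟫_ℝ) (q : ℍ[ℝ]) (x y : V) :
    ⟪quaternionLift i j hi hj hji q x, y⟫_ℝ =
      ⟪x, quaternionLift i j hi hj hji (star q) y⟫_ℝ := by
  have hji_apply : j (i y) = -i (j y) := LinearMap.congr_fun hji y
  simp only [quaternionLift_apply, LinearMap.add_apply, LinearMap.smul_apply, Module.End.mul_apply,
    Module.algebraMap_end_apply, inner_add_left, inner_add_right, inner_neg_right,
    real_inner_smul_left, real_inner_smul_right, hi_skew, hj_skew, hji_apply, Quaternion.re_star,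
    Quaternion.imI_star, Quaternion.imJ_star, Quaternion.imK_star]
  ring

variable {ρ : ℍ[ℝ] →ₐ[ℝ] End ℝ V}

theorem norm_map_apply_of_inner_map_star (hρ : ∀ q x y, ⟪ρ q x, y⟫_ℝ = ⟪x, ρ (star q) y⟫_ℝ)
    (q : ℍ[ℝ]) (x : V) : ‖ρ q x‖ = ‖q‖ * ‖x‖ := by
  have hsq : ρ (star q * q) = algebraMap ℝ _ (‖q‖ ^ 2) := by
    rw [Quaternion.star_mul_self, Quaternion.normSq_eq_norm_mul_self, ← sq]
    exact ρ.commutes _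
  rw [← sq_eq_sq₀ (norm_nonneg _) (by positivity), mul_pow]
  calc ‖ρ q x‖ ^ 2 = ⟪x, ρ (star q * q) x⟫_ℝ := by
        rw [← real_inner_self_eq_norm_sq, hρ, map_mul, Module.End.mul_apply]
    _ = ‖q‖ ^ 2 * ‖x‖ ^ 2 := by
        rw [hsq, Module.algebraMap_end_apply, real_inner_smul_right, real_inner_self_eq_norm_sq]

theorem exists_linearIsometryEquiv_map_apply
    (hρ : ∀ q x y, ⟪ρ q x, y⟫_ℝ = ⟪x, ρ (star q) y⟫_ℝ) (hdim : finrank ℝ V = 4) {e : V}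
    (he : ‖e‖ = 1) : ∃ φ : ℍ[ℝ] ≃ₗᵢ[ℝ] V, ∀ q, φ q = ρ q e := by
  have : FiniteDimensional ℝ V := FiniteDimensional.of_finrank_pos (by omega)
  let φ : ℍ[ℝ] →ₗᵢ[ℝ] V :=
    { toLinearMap := LinearMap.applyₗ e ∘ₗ ρ.toLinearMap
      norm_map' := fun q => by simp [norm_map_apply_of_inner_map_star hρ, he] }
  exact ⟨φ.toLinearIsometryEquiv (by rw [Quaternion.finrank_eq_four, hdim]), fun q => rfl⟩

end CliffordModule

section Unital

variable {V : Type*} [NormedAddCommGroup V] [InnerProductSpace ℝ V] {m : V →ₗ[ℝ] V →ₗ[ℝ] V}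
  {e i j : V}

theorem map_mul_map_eq_neg_of_norm_mul (hm : ∀ x y, ‖m x y‖ = ‖x‖ * ‖y‖)
    (hl : ∀ x, m e x = x) {a b : V} (ha : ⟪a, e⟫_ℝ = 0) (hb : ⟪b, e⟫_ℝ = 0)
    (hab : ⟪a, b⟫_ℝ = 0) : m a * m b = -(m b * m a) := by
  refine LinearMap.ext fun x => eq_neg_of_add_eq_zero_left ?_
  simpa [hab] using map_map_add_map_map_of_norm_mul hm hl ha hb x

theorem map_mul_self_of_norm_mul (hm : ∀ x y, ‖m x y‖ = ‖x‖ * ‖y‖)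
    (hl : ∀ x, m e x = x) {a : V} (ha : ⟪a, e⟫_ℝ = 0) (ha1 : ‖a‖ = 1) : m a * m a = -1 := by
  refine LinearMap.ext fun x => smul_right_injective V (two_ne_zero (α := ℝ)) ?_
  simpa [two_smul, ha1] using map_map_add_map_map_of_norm_mul hm hl ha ha x

theorem orthogonal_map_apply_of_norm_mul (hm : ∀ x y, ‖m x y‖ = ‖x‖ * ‖y‖)
    (hl : ∀ x, m e x = x) (hr : ∀ x, m x e = x)
    (hi : ⟪i, e⟫_ℝ = 0) (hj : ⟪j, e⟫_ℝ = 0) (hij : ⟪i, j⟫_ℝ = 0) :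
    ⟪m i j, e⟫_ℝ = 0 ∧ ⟪m i j, i⟫_ℝ = 0 ∧ ⟪m i j, j⟫_ℝ = 0 := by
  refine ⟨?_, ?_, ?_⟩
  · rw [inner_map_left_eq_neg_of_norm_mul hm hl hi, hr, real_inner_comm, hij, neg_zero]
  · simpa [hr, hj] using inner_map_map_right_of_norm_mul hm i j e
  · simpa [hl, hi] using inner_map_map_add_inner_map_map_of_norm_mul hm i e j j

theorem exists_linearIsometryEquiv_map_mul_of_norm_mul (hm : ∀ x y, ‖m x y‖ = ‖x‖ * ‖y‖)
    (hdim : finrank ℝ V = 4) (hl : ∀ x, m e x = x) (hr : ∀ x, m x e = x) (he : ‖e‖ = 1) :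
    ∃ φ : ℍ[ℝ] ≃ₗᵢ[ℝ] V, ∀ p q, φ (p * q) = m (φ p) (φ q) := by
  have : FiniteDimensional ℝ V := FiniteDimensional.of_finrank_pos (by omega)
  obtain ⟨b, hb⟩ := Orthonormal.exists_orthonormalBasis_extension_of_card_eq (𝕜 := ℝ)
    (ι := Fin 4) (by simpa using hdim) (v := fun _ => e) (s := {0})
    ⟨by simp [he], fun a b hab => (hab (Subsingleton.elim a b)).elim⟩
  obtain rfl : b 0 = e := hb 0 rfl
  have hi := b.inner_eq_zero (i := 1) (j := 0) (by decide)
  have hj := b.inner_eq_zero (i := 2) (j := 0) (by decide)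
  have hij := b.inner_eq_zero (i := 1) (j := 2) (by decide)
  obtain ⟨hk, hki, hkj⟩ := orthogonal_map_apply_of_norm_mul hm hl hr hi hj hij
  have hii := map_mul_self_of_norm_mul hm hl hi (b.norm_eq_one 1)
  have hjj := map_mul_self_of_norm_mul hm hl hj (b.norm_eq_one 2)
  have hji := map_mul_map_eq_neg_of_norm_mul hm hl hj hi (by rwa [real_inner_comm])
  set ρ := quaternionLift (m (b 1)) (m (b 2)) hii hjj hji
  have hρ_inner : ∀ q x y, ⟪ρ q x, y⟫_ℝ = ⟪x, ρ (star q) y⟫_ℝ :=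
    inner_quaternionLift_apply_left hii hjj hji (inner_map_left_eq_neg_of_norm_mul hm hl hi)
      (inner_map_left_eq_neg_of_norm_mul hm hl hj)
  obtain ⟨φ, hφ⟩ := exists_linearIsometryEquiv_map_apply hρ_inner hdim he
  -- `D = m (i j) - m i * m j` anticommutes with `m i` and `m j` and kills `e`, so `D = 0`.
  have hmk : m (m (b 1) (b 2)) = m (b 1) * m (b 2) := by
    refine LinearMap.ext fun x => ?_
    obtain ⟨q, rfl⟩ := φ.surjective x
    rw [hφ, ← sub_eq_zero, ← LinearMap.sub_apply]
    refine apply_quaternionLift_apply_eq_zero_of_anticommute hii hjj hji ?_ ?_ (by simp [hr]) q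
    · rw [sub_mul, map_mul_map_eq_neg_of_norm_mul hm hl hk hi hki, mul_assoc, hji]
      noncomm_ring
    · rw [sub_mul, map_mul_map_eq_neg_of_norm_mul hm hl hk hj hkj, mul_sub,
        ← mul_assoc (m (b 2)), hji]
      noncomm_ring
  have hmρ (q : ℍ[ℝ]) : m (ρ q (b 0)) = ρ q := by
    simp only [ρ, quaternionLift_apply, LinearMap.add_apply, LinearMap.smul_apply,
      Module.End.mul_apply, Module.algebraMap_end_apply, map_add, map_smul, hr, hmk]
    congr 3
    exact LinearMap.ext fun x => by simp [hl, Module.algebraMap_end_apply]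
  refine ⟨φ, fun p q => ?_⟩
  rw [hφ, hφ, hφ, hmρ, map_mul, Module.End.mul_apply]

end Unital

section Isotopy

variable {V : Type*} [NormedAddCommGroup V] [InnerProductSpace ℝ V] {m : V →ₗ[ℝ] V →ₗ[ℝ] V}

theorem exists_isotopy_quaternion_of_norm_mul (hm : ∀ x y, ‖m x y‖ = ‖x‖ * ‖y‖)
    (hdim : finrank ℝ V = 4) :
    ∃ (φ : V ≃ₗᵢ[ℝ] ℍ[ℝ]) (f g : ℍ[ℝ] ≃ₗᵢ[ℝ] ℍ[ℝ]), ∀ x y, φ (m x y) = f (φ x) * g (φ y) := by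
  have : FiniteDimensional ℝ V := finite_of_finrank_pos (by omega)
  have : Nontrivial V := nontrivial_of_finrank_pos (R := ℝ) (by omega)
  obtain ⟨u, hu⟩ := exists_norm_eq V zero_le_one
  let L : V ≃ₗᵢ[ℝ] V :=
    LinearIsometry.toLinearIsometryEquiv ⟨m u, fun a => by rw [hm, hu, one_mul]⟩ rfl
  let R : V ≃ₗᵢ[ℝ] V := LinearIsometry.toLinearIsometryEquiv
    ⟨m.flip u, fun a => by rw [LinearMap.flip_apply, hm, hu, mul_one]⟩ rfl
  have hL (x : V) : m u (L.symm x) = x := L.apply_symm_apply x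
  have hR (x : V) : m (R.symm x) u = x := R.apply_symm_apply x
  have hLu : L.symm (m u u) = u := L.symm_apply_apply u
  have hRu : R.symm (m u u) = u := R.symm_apply_apply u
  obtain ⟨ψ, hψ⟩ := exists_linearIsometryEquiv_map_mul_of_norm_mul (e := m u u)
    (m := m.compl₁₂ R.symm.toLinearEquiv.toLinearMap L.symm.toLinearEquiv.toLinearMap)
    (by simp [hm]) hdim (by simp [hRu, hL]) (by simp [hLu, hR]) (by simp [hm, hu])
  refine ⟨ψ.symm, (ψ.trans R).trans ψ.symm, (ψ.trans L).trans ψ.symm, fun x y => ?_⟩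
  rw [ψ.symm_apply_eq, hψ]
  simp

end Isotopy

section QuaternionIsometries

theorem mem_unitary_quaternion_iff_norm_eq_one {u : ℍ[ℝ]} : u ∈ unitary ℍ[ℝ] ↔ ‖u‖ = 1 := by
  rw [Unitary.mem_iff, Quaternion.star_mul_self, Quaternion.self_mul_star, and_self,
    Quaternion.normSq_eq_norm_mul_self, ← Quaternion.coe_one, Quaternion.coe_inj,
    mul_self_eq_one_iff]
  exact or_iff_left (by linarith [norm_nonneg u])

theorem inv_norm_smul_mem_unitary_quaternion {v : ℍ[ℝ]} (hv : v ≠ 0) :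
    ‖v‖⁻¹ • v ∈ unitary ℍ[ℝ] := by
  rw [mem_unitary_quaternion_iff_norm_eq_one, norm_smul, norm_inv, norm_norm,
    inv_mul_cancel₀ (norm_ne_zero_iff.2 hv)]

theorem reflection_orthogonal_unitary_quaternion (u : unitary ℍ[ℝ]) (x : ℍ[ℝ]) :
    (ℝ ∙ (u : ℍ[ℝ]))ᗮ.reflection x = -u * star x * u := by
  have hu : ‖(u : ℍ[ℝ])‖ = 1 := mem_unitary_quaternion_iff_norm_eq_one.1 u.2
  have hinner : (u : ℍ[ℝ]) * star x + x * star (u : ℍ[ℝ]) = (2 * ⟪(u : ℍ[ℝ]), x⟫_ℝ : ℝ) := by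
    rw [Quaternion.inner_def, ← Quaternion.self_add_star', star_mul, star_star]
  have hxu : x = x * star (u : ℍ[ℝ]) * u := by simp [mul_assoc]
  calc (ℝ ∙ (u : ℍ[ℝ]))ᗮ.reflection x = x - (2 * ⟪(u : ℍ[ℝ]), x⟫_ℝ : ℝ) * u := by
        rw [Submodule.reflection_orthogonal_apply, Submodule.reflection_singleton_apply, hu,
          Quaternion.coe_mul_eq_smul]
        simp [two_smul, two_mul, add_smul]
    _ = -u * star x * u := by rw [← hinner, add_mul, ← hxu]; noncomm_ring

theorem exists_reflection_orthogonal_eq_quaternion (v : ℍ[ℝ]) :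
    (ℝ ∙ v)ᗮ.reflection = .refl ℝ ℍ[ℝ] ∨
      ∃ u : unitary ℍ[ℝ], ∀ x, (ℝ ∙ v)ᗮ.reflection x = -u * star x * u := by
  rcases eq_or_ne v 0 with rfl | hv
  · left
    ext1 x
    exact Submodule.reflection_mem_subspace_eq_self (by simp)
  · right
    let u : unitary ℍ[ℝ] := ⟨‖v‖⁻¹ • v, inv_norm_smul_mem_unitary_quaternion hv⟩
    have hspan : (ℝ ∙ (u : ℍ[ℝ])) = ℝ ∙ v :=
      Submodule.span_singleton_smul_eq (.mk0 _ (inv_ne_zero (norm_ne_zero_iff.2 hv))) v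
    exact ⟨u, fun x => by simpa only [hspan] using reflection_orthogonal_unitary_quaternion u x⟩

theorem linearIsometryEquiv_quaternion_eq (f : ℍ[ℝ] ≃ₗᵢ[ℝ] ℍ[ℝ]) :
    ∃ p q : unitary ℍ[ℝ], (∀ x, f x = p * x * q) ∨ (∀ x, f x = p * star x * q) := by
  obtain ⟨l, -, rfl⟩ := f.reflections_generate_dim
  induction l with
  | nil => exact ⟨1, 1, Or.inl fun x => by simp⟩
  | cons v l ih =>
    obtain ⟨p, q, h⟩ := ih
    simp only [List.map_cons, List.prod_cons, LinearIsometryEquiv.coe_mul, Function.comp_apply]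
    rcases exists_reflection_orthogonal_eq_quaternion v with hv | ⟨u, hu⟩
    · exact ⟨p, q, by simpa [hv] using h⟩
    · refine ⟨-u * star q, star p * u, ?_⟩
      rcases h with h | h
      · exact Or.inr fun x => by simp [hu, h, Unitary.coe_neg, mul_assoc]
      · exact Or.inl fun x => by simp [hu, h, Unitary.coe_neg, mul_assoc]

end QuaternionIsometries

section DivisionRing

variable {D : Type*} [DivisionRing D] {a b : D}

-- Idea of Hua: compare the conjugates of `a` by `x` and by `1 + x`.
theorem commute_of_forall_commute_conj (h : ∀ x ≠ 0, Commute a (x * a * x⁻¹)) (x : D) :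
    Commute a x := by
  rcases eq_or_ne x 0 with rfl | hx
  · exact .zero_right a
  rcases eq_or_ne (1 + x) 0 with hx1 | hx1
  · rw [eq_neg_of_add_eq_zero_right hx1]
    exact .neg_one_right a
  set y := x * a * x⁻¹ with hy
  set z := (1 + x) * a * (1 + x)⁻¹ with hz
  have hyx : y * x = x * a := by rw [hy, inv_mul_cancel_right₀ hx]
  have hzx : z * (1 + x) = (1 + x) * a := by rw [hz, inv_mul_cancel_right₀ hx1]
  have hyz : (y - z) * x = z - a := by
    rw [sub_mul, hyx, sub_eq_sub_iff_add_eq_add, add_comm, ← one_add_mul, ← hzx, mul_one_add]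
  rcases eq_or_ne y z with hyz_eq | hyz_ne
  · have hza : z = a := by rw [← sub_eq_zero, ← hyz, hyz_eq, sub_self, zero_mul]
    rw [hyz_eq, hza] at hyx
    exact hyx
  · rw [← inv_mul_cancel_left₀ (sub_ne_zero.2 hyz_ne) x, hyz]
    exact (((h x hx).sub_right (h _ hx1)).inv_right₀).mul_right
      ((h _ hx1).sub_right (.refl a))

theorem commute_of_forall_conj_mul_left (ha : a ≠ 0)
    (h : ∀ x ≠ 0, a * x * a * (a * x)⁻¹ = x * a * x⁻¹) (x : D) : Commute a x := by
  refine commute_of_forall_commute_conj (fun x hx => ?_) x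
  have h := h x hx
  rw [mul_inv_rev, ← mul_assoc, mul_inv_eq_iff_eq_mul₀ ha] at h
  simpa only [Commute, SemiconjBy, mul_assoc] using h

theorem commute_of_forall_mul_mul_sq (ha : a ≠ 0) (hb : b ≠ 0)
    (h : ∀ u ≠ 0, a * u * b * b * a * u = u * b * a * a * u * b) :
    (∀ x, Commute a x) ∧ ∀ x, Commute b x := by
  have hab : Commute a b := by
    have h_one : a * b * b * a = b * a * a * b := by simpa using h 1 one_ne_zero
    have h_b : a * b * b * b * a = b * (a * b * b * a) := by
      refine mul_right_cancel₀ hb ?_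
      rw [h b hb, h_one]
      simp only [mul_assoc]
    refine mul_right_cancel₀ (mul_ne_zero (mul_ne_zero hb hb) ha) ?_
    simpa only [mul_assoc] using h_b
  have h_conj (u : D) (hu : u ≠ 0) : u⁻¹ * a * u * (b * b * a) = b * a * a * (u * b * u⁻¹) := by
    refine mul_left_cancel₀ hu (mul_right_cancel₀ hu ?_)
    simpa [mul_assoc, hu] using h u hu
  -- As `a` and `b` commute, the left side of `h_conj` is unchanged when `u` becomes `b * u`.
  have hb_comm : ∀ x, Commute b x := by
    refine commute_of_forall_conj_mul_left hb fun u hu => ?_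
    have h_inv : (b * u)⁻¹ * a * (b * u) = u⁻¹ * a * u := by
      rw [mul_inv_rev, mul_assoc _ b⁻¹, ← hab.inv_right₀.eq]
      simp [mul_assoc, hb]
    refine mul_left_cancel₀ (mul_ne_zero (mul_ne_zero hb ha) ha) ?_
    rw [← h_conj u hu, ← h_inv, h_conj _ (mul_ne_zero hb hu)]
  refine ⟨fun x => ?_, hb_comm⟩
  rcases eq_or_ne x 0 with rfl | hx
  · exact .zero_right a
  have h_fix : x⁻¹ * a * x = a := by
    refine mul_right_cancel₀ (mul_ne_zero (mul_ne_zero hb hb) ha) ?_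
    rw [h_conj x hx, ← (hb_comm x).eq, mul_inv_cancel_right₀ hx, mul_assoc b a a,
      mul_assoc b (a * a) b, ← (hb_comm (a * a)).eq, ← mul_assoc, ← mul_assoc, ← mul_assoc a,
      ← ((hb_comm a).mul_left (hb_comm a)).eq]
  rwa [mul_assoc, inv_mul_eq_iff_eq_mul₀ hx] at h_fix

theorem commute_of_forall_mul_conj_inv (ha : a ≠ 0)
    (h : ∀ u ≠ 0, a * (u⁻¹ * a⁻¹ * u) = u * a * u⁻¹ * a⁻¹) (x : D) : Commute a x := by
  -- The left side of `h` is unchanged when `u` is replaced by `a * u`.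
  refine commute_of_forall_conj_mul_left ha (fun u hu => ?_) x
  refine mul_right_cancel₀ (inv_ne_zero ha) ?_
  rw [← h _ hu, ← h _ (mul_ne_zero ha hu)]
  simp [mul_assoc, ha]

theorem commute_of_forall_inv_mul_mul {d : D} (ha : a ≠ 0) (hb : b ≠ 0)
    (h_linear : ∀ u, a * u * (b * a⁻¹ * b⁻¹) = d * u * b)
    (h_conj : ∀ u ≠ 0, a * u⁻¹ * (b * a⁻¹ * b⁻¹) * u = u * d * u⁻¹ * b) :
    (∀ x, Commute a x) ∧ ∀ x, Commute b x := by
  set c := b * a⁻¹ * b⁻¹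
  have hc_comm (u : D) : Commute (c * b⁻¹) u := by
    have h_move (u : D) : u * (c * b⁻¹) = a⁻¹ * d * u := by
      rw [← mul_assoc, mul_inv_eq_iff_eq_mul₀ hb, mul_assoc, mul_assoc,
        eq_inv_mul_iff_mul_eq₀ ha, ← mul_assoc, h_linear, mul_assoc]
    have h_one : c * b⁻¹ = a⁻¹ * d := by simpa using h_move 1
    rw [Commute, SemiconjBy, h_move, h_one]
  have hc_eq : c = a⁻¹ := by
    refine mul_left_cancel₀ hb (mul_right_cancel₀ (inv_ne_zero hb) ?_)
    rw [mul_assoc, ← (hc_comm b).eq, inv_mul_cancel_right₀ hb]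
  have ha_comm : ∀ x, Commute a x := by
    refine commute_of_forall_mul_conj_inv ha fun u hu => ?_
    have h := h_conj u hu
    rw [mul_assoc u, mul_assoc u, ← h_linear, hc_eq] at h
    simpa only [mul_assoc] using h
  refine ⟨ha_comm, fun x => ?_⟩
  have h_inv := (ha_comm x).mul_left (hc_comm x)
  rw [hc_eq, mul_inv_cancel_left₀ ha] at h_inv
  exact Commute.inv_left_iff₀.1 h_inv

theorem commute_of_forall_conj_mul_conj (ha : a ≠ 0) (hb : b ≠ 0)
    (h : ∀ u ≠ 0, u⁻¹ * a * u * b * a * (u⁻¹ * a * u) = u * a * u⁻¹ * (a * (u⁻¹ * a * u) * b))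
    (x : D) : Commute a x := by
  refine commute_of_forall_conj_mul_left ha (fun u hu => ?_) x
  -- Replacing `u` by `a * u` in `h` changes only the conjugate `u * a * u⁻¹`.
  have h_ne : a * (u⁻¹ * a * u) * b ≠ 0 := by simp [ha, hb, hu]
  have h_conj : (a * u)⁻¹ * a * (a * u) = u⁻¹ * a * u := by simp [mul_assoc, ha]
  refine mul_right_cancel₀ h_ne ?_
  rw [← h _ hu, ← h_conj]
  exact (h _ (mul_ne_zero ha hu)).symm

end DivisionRing

section Quaternion

theorem star_eq_normSq_smul_inv (u : ℍ[ℝ]) : star u = Quaternion.normSq u • u⁻¹ := by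
  rcases eq_or_ne u 0 with rfl | hu
  · simp
  · rw [Quaternion.inv_def, smul_inv_smul₀ (Quaternion.normSq_ne_zero.2 hu)]

theorem mul_self_eq_two_re_smul_sub_normSq (u : ℍ[ℝ]) :
    u * u = (2 * u.re) • u - (Quaternion.normSq u : ℝ) := by
  rw [← Quaternion.self_mul_star, Quaternion.star_eq_two_re_sub, mul_sub,
    Quaternion.mul_coe_eq_smul, sub_sub_cancel]

theorem coe_add_mul_coe_add_self (u : ℍ[ℝ]) {t : ℝ} (ht : t ^ 2 = Quaternion.normSq u) :
    (t + u) * (t + u) = (2 * (t + u.re)) • u := by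
  rw [mul_add, add_mul, add_mul, mul_self_eq_two_re_smul_sub_normSq u, ← ht,
    Quaternion.coe_mul_eq_smul, Quaternion.coe_mul_eq_smul, Quaternion.mul_coe_eq_smul,
    Quaternion.coe_pow, sq, Quaternion.coe_mul_eq_smul]
  module

-- Both square roots `t = ±‖u‖` of `normSq u` make `(t + u) * (t + u)` a multiple of `u`.
theorem apply_self_eq_zero_of_apply_mul_self {P : ℍ[ℝ] → ℍ[ℝ] →ₗ[ℝ] ℍ[ℝ]} {n : ℕ}
    (hP : ∀ (r : ℝ) y x, P (r • y) x = r ^ n • P y x) (h : ∀ x, P (x * x) x = 0) {u : ℍ[ℝ]}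
    (hu : u ≠ 0) : P u 1 = 0 ∧ P u u = 0 := by
  have key {t : ℝ} (ht : t ^ 2 = Quaternion.normSq u) : P u (t + u) = 0 := by
    have hsq := coe_add_mul_coe_add_self u ht
    rcases eq_or_ne (2 * (t + u.re)) 0 with h0 | h0
    · rw [h0, zero_smul, mul_self_eq_zero] at hsq
      rw [hsq, map_zero]
    · have := h (t + u)
      rw [hsq, hP] at this
      exact (smul_eq_zero.1 this).resolve_left (pow_ne_zero n h0)
  have h_pos := key (t := ‖u‖) (by rw [Quaternion.normSq_eq_norm_mul_self, sq])
  have h_neg := key (t := -‖u‖) (by rw [Quaternion.normSq_eq_norm_mul_self, neg_sq, sq])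
  have hcoe (t : ℝ) : (t : ℍ[ℝ]) = t • 1 := by rw [← Quaternion.coe_mul_eq_smul, mul_one]
  rw [hcoe, map_add, map_smul] at h_pos h_neg
  constructor
  · have : (2 * ‖u‖) • P u 1 = 0 := by linear_combination (norm := module) h_pos - h_neg
    exact (smul_eq_zero.1 this).resolve_left (by simpa using hu)
  · have : (2:ℝ) • P u u = 0 := by linear_combination (norm := module) h_pos + h_neg
    exact (smul_eq_zero.1 this).resolve_left two_ne_zero

variable {a b : ℍ[ℝ]}

theorem commute_of_square_identity (ha : a ≠ 0) (hb : b ≠ 0)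
    (h : ∀ x, a * (x * x) * b * x * b * a * (x * x) = x * x * b * a * x * a * (x * x) * b) :
    (∀ x, Commute a x) ∧ ∀ x, Commute b x := by
  let P (y : ℍ[ℝ]) : ℍ[ℝ] →ₗ[ℝ] ℍ[ℝ] :=
    LinearMap.mulLeftRight ℝ (a * y * b, b * a * y) -
      LinearMap.mulLeftRight ℝ (y * b * a, a * y * b)
  refine commute_of_forall_mul_mul_sq ha hb fun u hu => sub_eq_zero.1 ?_
  have hP : P u 1 = 0 := by
    refine (apply_self_eq_zero_of_apply_mul_self (P := P) (n := 2) (fun r y x => ?_)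
      (fun x => ?_) hu).1
    · simp [P, smul_smul, sq, smul_sub]
    · simpa [P, sub_eq_zero, mul_assoc] using h x
  simpa [P, mul_assoc] using hP

theorem mul_mul_eq_and_of_star_square_identity {c d : ℍ[ℝ]}
    (h : ∀ x, a * star (x * x) * c * x = x * d * star (x * x) * b) (u : ℍ[ℝ]) :
    a * u * c = d * u * b ∧ a * star u * c * u = u * d * star u * b := by
  rcases eq_or_ne u 0 with rfl | hu
  · simp
  let P (y : ℍ[ℝ]) : ℍ[ℝ] →ₗ[ℝ] ℍ[ℝ] :=
    LinearMap.mulLeft ℝ (a * star y * c) - LinearMap.mulRight ℝ (d * star y * b)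
  have hP {u : ℍ[ℝ]} (hu : u ≠ 0) : P u 1 = 0 ∧ P u u = 0 :=
    apply_self_eq_zero_of_apply_mul_self (n := 1) (fun r y x => by simp [P, smul_sub])
      (fun x => by simpa [P, sub_eq_zero, mul_assoc] using h x) hu
  have hu_star : star u ≠ 0 := star_ne_zero.2 hu
  exact ⟨by simpa [P, sub_eq_zero, mul_assoc] using (hP hu_star).1,
    by simpa [P, sub_eq_zero, mul_assoc] using (hP hu).2⟩

theorem commute_of_star_square_identity {d : ℍ[ℝ]} (ha : a ≠ 0) (hb : b ≠ 0)
    (h : ∀ x, a * star (x * x) * (b * a⁻¹ * b⁻¹) * x = x * d * star (x * x) * b) :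
    (∀ x, Commute a x) ∧ ∀ x, Commute b x := by
  refine commute_of_forall_inv_mul_mul ha hb
    (fun u => (mul_mul_eq_and_of_star_square_identity h u).1) fun u hu => ?_
  have h_star := (mul_mul_eq_and_of_star_square_identity h u).2
  simp only [star_eq_normSq_smul_inv, mul_smul_comm, smul_mul_assoc] at h_star
  exact smul_right_injective _ (Quaternion.normSq_ne_zero.2 hu) h_star

theorem commute_of_star_mul_identity (ha : a ≠ 0) (hb : b ≠ 0)
    (h : ∀ x ≠ 0, star x * a * x * b * a * star x * a * x =
      x * a * star x * a * star x * a * x * b) (x : ℍ[ℝ]) :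
    Commute a x := by
  refine commute_of_forall_conj_mul_conj ha hb (fun u hu => ?_) x
  have h_star := h u hu
  simp only [star_eq_normSq_smul_inv, mul_smul_comm, smul_mul_assoc] at h_star
  have h_inv := smul_right_injective _ (Quaternion.normSq_ne_zero.2 hu)
    (smul_right_injective _ (Quaternion.normSq_ne_zero.2 hu) h_star)
  simpa only [mul_assoc] using h_inv

end Quaternion

section UnitQuaternions

theorem coe_unitary_ne_zero {R : Type*} [MonoidWithZero R] [Nontrivial R] [StarMul R]
    (p : unitary R) : (p : R) ≠ 0 :=
  (Unitary.toUnits p).ne_zero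

theorem star_coe_unitary_eq_inv {G : Type*} [GroupWithZero G] [StarMul G] (p : unitary G) :
    star (p : G) = (p : G)⁻¹ :=
  eq_inv_of_mul_eq_one_left (Unitary.coe_star_mul_self p)

theorem star_eq_self_of_forall_commute {u : ℍ[ℝ]} (h : ∀ x, Commute u x) : star u = u := by
  have h_cross (x : ℍ[ℝ]) : u.imI * x.imJ = u.imJ * x.imI ∧ u.imJ * x.imK = u.imK * x.imJ := by
    have h := Quaternion.ext_iff.1 (h x).eq
    simp only [Quaternion.imI_mul, Quaternion.imK_mul] at h
    constructor <;> linarith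
  have h_i := h_cross ⟨0, 1, 0, 0⟩
  have h_j := h_cross ⟨0, 0, 1, 0⟩
  ext <;> simp <;> linarith

theorem coe_unitary_quaternion_eq_one_or_neg_one {p : unitary ℍ[ℝ]}
    (h : ∀ x, Commute (p : ℍ[ℝ]) x) : (p : ℍ[ℝ]) = 1 ∨ (p : ℍ[ℝ]) = -1 := by
  rw [← mul_self_eq_one_iff]
  nth_rw 1 [← star_eq_self_of_forall_commute h]
  exact Unitary.coe_star_mul_self p

theorem exists_unitary_conj_eq {a b : unitary ℍ[ℝ]} (h_re : (a : ℍ[ℝ]).re = (b : ℍ[ℝ]).re)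
    (h_ne : (a : ℍ[ℝ]) ≠ star (b : ℍ[ℝ])) :
    ∃ s : unitary ℍ[ℝ], s * a * star (s : ℍ[ℝ]) = b := by
  -- Since `a + star a = b + star b`, the quaternion `a - star b` intertwines `a` and `b`.
  set t := (a : ℍ[ℝ]) - star (b : ℍ[ℝ]) with ht
  have h_intertwine : t * a = b * t := by
    have h_normSq : Quaternion.normSq (a : ℍ[ℝ]) = 1 := by
      rw [Quaternion.normSq_eq_norm_mul_self, mem_unitary_quaternion_iff_norm_eq_one.1 a.2, one_mul]
    rw [ht, sub_mul, mul_sub, Unitary.mul_star_self_of_mem b.2, mul_self_eq_two_re_smul_sub_normSq,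
      h_normSq, Quaternion.star_eq_two_re_sub, sub_mul, Quaternion.coe_mul_eq_smul, h_re,
      Quaternion.coe_one]
    abel
  have hs := inv_norm_smul_mem_unitary_quaternion (sub_ne_zero.2 h_ne)
  refine ⟨⟨_, hs⟩, ?_⟩
  rw [smul_mul_assoc, h_intertwine, ← mul_smul_comm, mul_assoc, Unitary.mul_star_self_of_mem hs,
    mul_one]

theorem quatExpI_mem_unitary (α : ℝ) : quatExpI α ∈ unitary ℍ[ℝ] := by
  rw [mem_unitary_quaternion_iff_norm_eq_one, ← pow_eq_one_iff_of_nonneg (norm_nonneg _)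
    two_ne_zero, sq, ← Quaternion.normSq_eq_norm_mul_self, Quaternion.normSq_def']
  simp [quatExpI]

theorem quatExpI_zero : quatExpI 0 = 1 := by
  rw [quatExpI, Real.cos_zero, Real.sin_zero]
  rfl

theorem quatExpI_pi_sub (α : ℝ) : quatExpI (Real.pi - α) = -star (quatExpI α) := by
  ext <;> simp <;> simp [quatExpI]

theorem exists_unitary_conj_eq_quatExpI_of_le (a : unitary ℍ[ℝ]) :
    ∃ s : unitary ℍ[ℝ], ∃ α : ℝ, 0 ≤ α ∧ α ≤ Real.pi ∧
      (s * a * star (s : ℍ[ℝ]) = quatExpI α ∨ s * a * star (s : ℍ[ℝ]) = -quatExpI α) := by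
  set α := Real.arccos (a : ℍ[ℝ]).re
  have h_abs : |(a : ℍ[ℝ]).re| ≤ 1 := by
    simpa [Quaternion.inner_def, mem_unitary_quaternion_iff_norm_eq_one.1 a.2] using
      abs_real_inner_le_norm (a : ℍ[ℝ]) 1
  by_cases h_star : (a : ℍ[ℝ]) = star (quatExpI α)
  · refine ⟨1, Real.pi - α, sub_nonneg.2 (Real.arccos_le_pi _),
      sub_le_self _ (Real.arccos_nonneg _), .inr ?_⟩
    simp [quatExpI_pi_sub, ← h_star]
  · obtain ⟨s, hs⟩ := exists_unitary_conj_eq (b := ⟨_, quatExpI_mem_unitary α⟩)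
      (Real.cos_arccos (neg_le_of_abs_le h_abs) (le_of_abs_le h_abs)).symm h_star
    exact ⟨s, α, Real.arccos_nonneg _, Real.arccos_le_pi _, .inl hs⟩

theorem exists_unitary_conj_eq_quatExpI (a : unitary ℍ[ℝ]) :
    ∃ s : unitary ℍ[ℝ], ∃ α : ℝ, 0 ≤ α ∧ α < Real.pi ∧
      (s * a * star (s : ℍ[ℝ]) = quatExpI α ∨ s * a * star (s : ℍ[ℝ]) = -quatExpI α) := by
  obtain ⟨s, α, h_nonneg, h_le, h⟩ := exists_unitary_conj_eq_quatExpI_of_le a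
  rcases h_le.lt_or_eq with h_lt | rfl
  · exact ⟨s, α, h_nonneg, h_lt, h⟩
  · have h_pi : quatExpI Real.pi = -quatExpI 0 := by
      simpa [quatExpI_zero] using quatExpI_pi_sub 0
    rw [h_pi, neg_neg, or_comm] at h
    exact ⟨s, 0, le_rfl, Real.pi_pos, h⟩

end UnitQuaternions

section Isomorphism

variable {A B C : Type*}

/-- The identity `(x², x, x²) = 0` for a binary operation. -/
def IsSquareAssociative (op : A → A → A) : Prop :=
  ∀ x, op (op (op x x) x) (op x x) = op (op x x) (op x (op x x))

theorem IsSquareAssociative.flip {op : A → A → A} (h : IsSquareAssociative op) :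
    IsSquareAssociative (flip op) :=
  fun x => (h x).symm

variable [AddCommGroup A] [Module ℝ A] [AddCommGroup B] [Module ℝ B] [AddCommGroup C] [Module ℝ C]

/-- Isomorphism of the real algebras with products `op` and `op'`. The products are bare functions,
so that the isotopes of `ℍ` can be written as `fun x y ↦ …` without bundling bilinearity. -/
def OpIsomorphic (op : A → A → A) (op' : B → B → B) : Prop :=
  ∃ e : A ≃ₗ[ℝ] B, ∀ x y, e (op x y) = op' (e x) (e y)

namespace OpIsomorphic

variable {op : A → A → A} {op' : B → B → B} {op'' : C → C → C}

theorem trans (h : OpIsomorphic op op') (h' : OpIsomorphic op' op'') : OpIsomorphic op op'' := by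
  obtain ⟨e, he⟩ := h
  obtain ⟨e', he'⟩ := h'
  exact ⟨e.trans e', fun x y => by simp [he, he']⟩

theorem flip (h : OpIsomorphic op op') : OpIsomorphic (flip op) (flip op') := by
  obtain ⟨e, he⟩ := h
  exact ⟨e, fun x y => he y x⟩

theorem of_eq_or_eq_neg {op op' : A → A → A} (h_neg : ∀ x y, op' (-x) (-y) = op' x y)
    (h : op = op' ∨ op = -op') : OpIsomorphic op op' := by
  rcases h with rfl | rfl
  · exact ⟨.refl ℝ A, fun x y => rfl⟩
  · exact ⟨.neg ℝ, fun x y => by simp [h_neg]⟩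

theorem isSquareAssociative_iff (h : OpIsomorphic op op') :
    IsSquareAssociative op ↔ IsSquareAssociative op' := by
  obtain ⟨e, he⟩ := h
  simp only [IsSquareAssociative, ← e.injective.eq_iff, he, e.surjective.forall]

end OpIsomorphic

end Isomorphism

section QuaternionIsotopes

theorem opIsomorphic_star_star (op : ℍ[ℝ] → ℍ[ℝ] → ℍ[ℝ]) :
    OpIsomorphic op fun x y => star (op (star x) (star y)) :=
  ⟨Quaternion.starAe.toLinearEquiv.trans (MulOpposite.opLinearEquiv ℝ).symm, fun x y => by simp⟩

theorem opIsomorphic_mul_right {R : Type*} [Ring R] [StarMul R] [Algebra ℝ R] (op : R → R → R)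
    (u : unitary R) :
    OpIsomorphic op fun x y => op (x * star (u : R)) (y * star (u : R)) * u :=
  ⟨Units.mulRightLinearEquiv ℝ (Unitary.toUnits u), fun x y => by simp [mul_assoc]⟩

theorem opIsomorphic_conj {R : Type*} [Ring R] [StarRing R] [Algebra ℝ R] (op : R → R → R)
    (s : unitary R) :
    OpIsomorphic op fun x y => s * op (star s * x * s) (star s * y * s) * star (s : R) :=
  ⟨(Unitary.conjStarAlgAut ℝ R s).toAlgEquiv.toLinearEquiv, fun x y => by
    have h_cancel (z : R) : star (s : R) * (s * z) = z := by
      rw [← mul_assoc, Unitary.coe_star_mul_self, one_mul]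
    simp [mul_assoc, h_cancel]⟩

theorem opIsomorphic_mul_mul {p q r : unitary ℍ[ℝ]}
    (h : IsSquareAssociative fun x y : ℍ[ℝ] => p * x * q * y * r) :
    OpIsomorphic (fun x y : ℍ[ℝ] => p * x * q * y * r) fun x y : ℍ[ℝ] => x * y := by
  set b := star q * r * q with hb_def
  have h_iso : OpIsomorphic (fun x y : ℍ[ℝ] => p * x * q * y * r)
      fun x y : ℍ[ℝ] => p * x * y * b := by
    simpa [hb_def, mul_assoc] using
      opIsomorphic_mul_right (R := ℍ[ℝ]) (fun x y => p * x * q * y * r) q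
  have hp := coe_unitary_ne_zero p
  have hb := coe_unitary_ne_zero b
  have h_comm := commute_of_square_identity hp hb fun x => by
    refine mul_left_cancel₀ (mul_ne_zero hp hp) (mul_right_cancel₀ (mul_ne_zero hb hb) ?_)
    simpa only [mul_assoc] using h_iso.isSquareAssociative_iff.1 h x
  refine h_iso.trans (.of_eq_or_eq_neg (by simp) ?_)
  rcases coe_unitary_quaternion_eq_one_or_neg_one h_comm.1 with h_p | h_p <;>
    rcases coe_unitary_quaternion_eq_one_or_neg_one h_comm.2 with h_b | h_b <;>
    simp [funext_iff, h_p, h_b]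

theorem opIsomorphic_star_mul_star {p q r : unitary ℍ[ℝ]}
    (h : IsSquareAssociative fun x y : ℍ[ℝ] => p * star x * q * star y * r) :
    OpIsomorphic (fun x y : ℍ[ℝ] => p * star x * q * star y * r)
      fun x y : ℍ[ℝ] => star x * star y := by
  set a := p * star q with ha_def
  set b := r * star q with hb_def
  have h_iso : OpIsomorphic (fun x y : ℍ[ℝ] => p * star x * q * star y * r)
      fun x y : ℍ[ℝ] => a * star x * star y * b := by
    simpa [ha_def, hb_def, mul_assoc, star_coe_unitary_eq_inv, coe_unitary_ne_zero]
      using opIsomorphic_mul_right (R := ℍ[ℝ]) (fun x y => p * star x * q * star y * r) (star q)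
  have ha := coe_unitary_ne_zero a
  have hb := coe_unitary_ne_zero b
  have h_comm := commute_of_star_square_identity (d := (a : ℍ[ℝ])⁻¹ * (b : ℍ[ℝ])⁻¹ * a) ha hb
    fun x => by
      rcases eq_or_ne x 0 with rfl | hx
      · simp
      refine mul_left_cancel₀ (mul_ne_zero (mul_ne_zero ha (inv_ne_zero hb)) hx)
        (mul_right_cancel₀ (mul_ne_zero hx (mul_ne_zero (inv_ne_zero ha) hb)) ?_)
      simpa [mul_assoc, star_coe_unitary_eq_inv] using h_iso.isSquareAssociative_iff.1 h x
  refine h_iso.trans (.of_eq_or_eq_neg (by simp) ?_)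
  rcases coe_unitary_quaternion_eq_one_or_neg_one h_comm.1 with h_a | h_a <;>
    rcases coe_unitary_quaternion_eq_one_or_neg_one h_comm.2 with h_b | h_b <;>
    simp [funext_iff, h_a, h_b]

theorem exists_opIsomorphic_star_mul {p q r : unitary ℍ[ℝ]}
    (h : IsSquareAssociative fun x y : ℍ[ℝ] => p * star x * q * y * r) :
    ∃ c : unitary ℍ[ℝ], OpIsomorphic (fun x y : ℍ[ℝ] => p * star x * q * y * r)
      fun x y : ℍ[ℝ] => star x * y * c := by
  set b := p * r * star p with hb_def
  have h_iso : OpIsomorphic (fun x y : ℍ[ℝ] => p * star x * q * y * r)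
      fun x y : ℍ[ℝ] => star x * q * y * b := by
    simpa [hb_def, mul_assoc, star_coe_unitary_eq_inv, coe_unitary_ne_zero]
      using opIsomorphic_mul_right (R := ℍ[ℝ]) (fun x y => p * star x * q * y * r) (star p)
  have hq := coe_unitary_ne_zero q
  have hb := coe_unitary_ne_zero b
  have h_comm := commute_of_star_mul_identity hq hb fun x hx => by
    refine mul_left_cancel₀ (mul_ne_zero (mul_ne_zero (inv_ne_zero hb) (star_ne_zero.2 hx))
      (inv_ne_zero hq)) (mul_right_cancel₀ (mul_ne_zero hb hb) ?_)
    simpa [mul_assoc, star_coe_unitary_eq_inv] using h_iso.isSquareAssociative_iff.1 h x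
  refine ⟨b, h_iso.trans (.of_eq_or_eq_neg (by simp) ?_)⟩
  rcases coe_unitary_quaternion_eq_one_or_neg_one h_comm with h_q | h_q <;>
    simp [funext_iff, h_q]

theorem exists_opIsomorphic_mul_star {p q r : unitary ℍ[ℝ]}
    (h : IsSquareAssociative fun x y : ℍ[ℝ] => p * x * q * star y * r) :
    ∃ c : unitary ℍ[ℝ], OpIsomorphic (fun x y : ℍ[ℝ] => p * x * q * star y * r)
      fun x y : ℍ[ℝ] => c * x * star y := by
  have h_flip : OpIsomorphic (flip fun x y : ℍ[ℝ] => p * x * q * star y * r)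
      fun x y : ℍ[ℝ] => ↑(star r) * star x * ↑(star q) * y * ↑(star p) := by
    simpa [flip, mul_assoc] using opIsomorphic_star_star (flip fun x y => p * x * q * star y * r)
  obtain ⟨c, hc⟩ := exists_opIsomorphic_star_mul (h_flip.isSquareAssociative_iff.1 h.flip)
  refine ⟨star c, (h_flip.trans hc).flip.trans ?_⟩
  simpa [flip, mul_assoc] using opIsomorphic_star_star (flip fun x y => star x * y * (c : ℍ[ℝ]))

theorem exists_opIsomorphic_star_mul_quatExpI (c : unitary ℍ[ℝ]) :
    ∃ α : ℝ, 0 ≤ α ∧ α < Real.pi ∧ OpIsomorphic (fun x y : ℍ[ℝ] => star x * y * c)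
      fun x y : ℍ[ℝ] => star x * y * quatExpI α := by
  obtain ⟨s, α, h_nonneg, h_lt, h⟩ := exists_unitary_conj_eq_quatExpI c
  have h_iso : OpIsomorphic (fun x y : ℍ[ℝ] => star x * y * c)
      fun x y : ℍ[ℝ] => star x * y * (s * c * star (s : ℍ[ℝ])) := by
    simpa [mul_assoc, star_coe_unitary_eq_inv, coe_unitary_ne_zero] using
      opIsomorphic_conj (R := ℍ[ℝ]) (fun x y => star x * y * c) s
  refine ⟨α, h_nonneg, h_lt, h_iso.trans (.of_eq_or_eq_neg (by simp) ?_)⟩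
  rcases h with h | h <;> simp [funext_iff, h]

theorem exists_opIsomorphic_quatExpI_mul_star (c : unitary ℍ[ℝ]) :
    ∃ α : ℝ, 0 ≤ α ∧ α < Real.pi ∧ OpIsomorphic (fun x y : ℍ[ℝ] => c * x * star y)
      fun x y : ℍ[ℝ] => quatExpI α * x * star y := by
  obtain ⟨s, α, h_nonneg, h_lt, h⟩ := exists_unitary_conj_eq_quatExpI c
  have h_iso : OpIsomorphic (fun x y : ℍ[ℝ] => c * x * star y)
      fun x y : ℍ[ℝ] => s * c * star (s : ℍ[ℝ]) * x * star y := by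
    simpa [mul_assoc, star_coe_unitary_eq_inv, coe_unitary_ne_zero] using
      opIsomorphic_conj (R := ℍ[ℝ]) (fun x y => c * x * star y) s
  refine ⟨α, h_nonneg, h_lt, h_iso.trans (.of_eq_or_eq_neg (by simp) ?_)⟩
  rcases h with h | h <;> simp [funext_iff, h]

theorem exists_opIsomorphic_unitary_isotope {A : Type*} [NormedAddCommGroup A] [NormedSpace ℝ A]
    {m : A →ₗ[ℝ] A →ₗ[ℝ] A} (hm : ∀ x y, ‖m x y‖ = ‖x‖ * ‖y‖) (hdim : finrank ℝ A = 4) :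
    ∃ p q r : unitary ℍ[ℝ],
      OpIsomorphic (fun x y => m x y) (fun x y : ℍ[ℝ] => p * x * q * y * r) ∨
      OpIsomorphic (fun x y => m x y) (fun x y : ℍ[ℝ] => p * star x * q * star y * r) ∨
      OpIsomorphic (fun x y => m x y) (fun x y : ℍ[ℝ] => p * star x * q * y * r) ∨
      OpIsomorphic (fun x y => m x y) (fun x y : ℍ[ℝ] => p * x * q * star y * r) := by
  have h_pos : 0 < finrank ℝ A := by omega
  have : Nontrivial A := nontrivial_of_finrank_pos h_pos
  have : FiniteDimensional ℝ A := .of_finrank_pos h_pos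
  let : InnerProductSpace ℝ A := .ofNorm ℝ (parallelogram_law_of_norm_mul_s19 hm)
  obtain ⟨φ, f, g, hφ⟩ := exists_isotopy_quaternion_of_norm_mul hm hdim
  obtain ⟨p, q, hf⟩ := linearIsometryEquiv_quaternion_eq f
  obtain ⟨q', r, hg⟩ := linearIsometryEquiv_quaternion_eq g
  refine ⟨p, q * q', r, ?_⟩
  rcases hf with hf | hf <;> rcases hg with hg | hg
  · exact .inl ⟨φ.toLinearEquiv, fun x y => by simp [hφ, hf, hg, mul_assoc]⟩
  · exact .inr (.inr (.inr ⟨φ.toLinearEquiv, fun x y => by simp [hφ, hf, hg, mul_assoc]⟩))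
  · exact .inr (.inr (.inl ⟨φ.toLinearEquiv, fun x y => by simp [hφ, hf, hg, mul_assoc]⟩))
  · exact .inr (.inl ⟨φ.toLinearEquiv, fun x y => by simp [hφ, hf, hg, mul_assoc]⟩)

theorem isSquareAssociative_mul {S : Type*} [Semigroup S] :
    IsSquareAssociative fun x y : S => x * y :=
  fun x => by simp only [mul_assoc]

theorem isSquareAssociative_star_mul_star :
    IsSquareAssociative fun x y : ℍ[ℝ] => star x * star y := by
  intro x
  have h_cancel (y : ℍ[ℝ]) : star x * (x * y) = Quaternion.normSq x • y := by
    rw [← mul_assoc, Quaternion.star_mul_self, Quaternion.coe_mul_eq_smul]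
  simp only [star_mul, star_star, mul_assoc, Quaternion.self_mul_star, h_cancel,
    Quaternion.mul_coe_eq_smul, Quaternion.star_smul, smul_mul_assoc, mul_smul_comm]

theorem isSquareAssociative_star_mul (c : ℍ[ℝ]) :
    IsSquareAssociative fun x y : ℍ[ℝ] => star x * y * c := by
  intro x
  simp only [Quaternion.star_mul_self, Quaternion.coe_mul_eq_smul, Quaternion.star_smul, star_mul,
    star_star, smul_mul_assoc, mul_smul_comm, mul_assoc]

theorem isSquareAssociative_mul_star (c : ℍ[ℝ]) :
    IsSquareAssociative fun x y : ℍ[ℝ] => c * x * star y := by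
  intro x
  simp only [mul_assoc, Quaternion.self_mul_star, Quaternion.mul_coe_eq_smul, Quaternion.star_smul,
    star_mul, star_star, smul_mul_assoc, mul_smul_comm]

end QuaternionIsotopes

/-- A 4-dimensional absolute-valued real algebra satisfies the identity `(x², x, x²) = 0`
if and only if it is isomorphic to `ℍ`, to `⁎ℍ` (product `x ⊙ y = x̄ * ȳ`), or, for some
`α ∈ [0, π)`, to `*ℍ(1, e^{iα})` (product `x ⊙ y = x̄ * y * e^{iα}`) or to
`ℍ*(e^{iα}, 1)` (product `x ⊙ y = e^{iα} * x * ȳ`). -/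
theorem stmt_19 {A : Type*} [NormedAddCommGroup A] [NormedSpace ℝ A]
    (mul : A →ₗ[ℝ] A →ₗ[ℝ] A)
    (habs : ∀ x y : A, ‖mul x y‖ = ‖x‖ * ‖y‖)
    (hdim : Module.finrank ℝ A = 4) :
    (∀ x : A, mul (mul (mul x x) x) (mul x x) = mul (mul x x) (mul x (mul x x)))
      ↔ ((∃ e : A ≃ₗ[ℝ] Quaternion ℝ, ∀ x y : A, e (mul x y) = e x * e y) ∨
          (∃ e : A ≃ₗ[ℝ] Quaternion ℝ,
            ∀ x y : A, e (mul x y) = star (e x) * star (e y)) ∨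
          (∃ α : ℝ, 0 ≤ α ∧ α < Real.pi ∧
            ((∃ e : A ≃ₗ[ℝ] Quaternion ℝ,
                ∀ x y : A, e (mul x y) = star (e x) * e y * quatExpI α) ∨
             (∃ e : A ≃ₗ[ℝ] Quaternion ℝ,
                ∀ x y : A, e (mul x y) = quatExpI α * e x * star (e y))))) := by
  have h_iff {op : ℍ[ℝ] → ℍ[ℝ] → ℍ[ℝ]} (h : OpIsomorphic (fun x y => mul x y) op) :
      (∀ x, mul (mul (mul x x) x) (mul x x) = mul (mul x x) (mul x (mul x x))) ↔
        IsSquareAssociative op := h.isSquareAssociative_iff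
  constructor
  · intro h
    obtain ⟨p, q, r, h_iso | h_iso | h_iso | h_iso⟩ := exists_opIsomorphic_unitary_isotope habs hdim
    · exact .inl (h_iso.trans (opIsomorphic_mul_mul ((h_iff h_iso).1 h)))
    · exact .inr (.inl (h_iso.trans (opIsomorphic_star_mul_star ((h_iff h_iso).1 h))))
    · obtain ⟨c, hc⟩ := exists_opIsomorphic_star_mul ((h_iff h_iso).1 h)
      obtain ⟨α, h_nonneg, h_lt, hα⟩ := exists_opIsomorphic_star_mul_quatExpI c
      exact .inr (.inr ⟨α, h_nonneg, h_lt, .inl (h_iso.trans (hc.trans hα))⟩)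
    · obtain ⟨c, hc⟩ := exists_opIsomorphic_mul_star ((h_iff h_iso).1 h)
      obtain ⟨α, h_nonneg, h_lt, hα⟩ := exists_opIsomorphic_quatExpI_mul_star c
      exact .inr (.inr ⟨α, h_nonneg, h_lt, .inr (h_iso.trans (hc.trans hα))⟩)
  · rintro (h_iso | h_iso | ⟨α, -, -, h_iso | h_iso⟩)
    · exact (h_iff h_iso).2 isSquareAssociative_mul
    · exact (h_iff (op := fun x y => star x * star y) h_iso).2 isSquareAssociative_star_mul_star
    · exact (h_iff (op := fun x y => star x * y * quatExpI α) h_iso).2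
        (isSquareAssociative_star_mul _)
    · exact (h_iff (op := fun x y => quatExpI α * x * star y) h_iso).2
        (isSquareAssociative_mul_star _)
end
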